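/- arXiv:0905.1489 — 2 statements merged into one kernel-verified Lean document; each statement's English description precedes it below -/
import Mathlib

section
/- Let (C, δ, β) be a mixed complex over κ. For every integer r, consider the inverse system A_k := ^+H^δ_{r+2k} (k ≥ 0) with structure maps S : A_{k+1} → A_k induced by the projections ^+C^* → ^+C^{*−2} dropping the top component. Define Φ : ∏_k A_k → ∏_k A_k by Φ((a_k)) = (a_k − S(a_{k+1})), and set lim := ker Φ and lim¹ := coker Φ. Then there is a short exact sequence of κ-vector spaces 0 → lim¹_k ^+H^δ_{r−1+2k} → 𝕡H^r → lim_k ^+H^δ_{r+2k} → 0. -/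
open LinearMap DirectSum

namespace CDGA

variable {κ : Type} [Field κ]

/-- Cast along an equality of indices. -/
def fcast {ι : Type} {C : ι → Type} [∀ i, AddCommGroup (C i)] [∀ i, Module κ (C i)]
    {m n : ι} (h : m = n) : C m →ₗ[κ] C n := by subst h; exact LinearMap.id

section CohomologyDefs

variable {C : ℤ → Type} [∀ n, AddCommGroup (C n)] [∀ n, Module κ (C n)]

/-- Cocycles of a cochain complex. -/
def cocycles (d : ∀ n : ℤ, C n →ₗ[κ] C (n + 1)) (r : ℤ) : Submodule κ (C r) :=
  LinearMap.ker (d r)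

/-- Coboundaries of a cochain complex. -/
def cobound (d : ∀ n : ℤ, C n →ₗ[κ] C (n + 1)) (r : ℤ) : Submodule κ (C r) :=
  LinearMap.range ((fcast (show r - 1 + 1 = r by ring)).comp (d (r - 1)))

/-- Cohomology of a cochain complex in degree `r`. -/
abbrev cohomology (d : ∀ n : ℤ, C n →ₗ[κ] C (n + 1)) (r : ℤ) : Type :=
  ↥(cocycles d r) ⧸ (cobound d r).comap (cocycles d r).subtype

/-- Cycles of a chain complex (degree `-1` differential). -/
def bcycles (d : ∀ n : ℤ, C n →ₗ[κ] C (n - 1)) (r : ℤ) : Submodule κ (C r) :=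
  LinearMap.ker (d r)

/-- Boundaries of a chain complex. -/
def bbound (d : ∀ n : ℤ, C n →ₗ[κ] C (n - 1)) (r : ℤ) : Submodule κ (C r) :=
  LinearMap.range ((fcast (show r + 1 - 1 = r by ring)).comp (d (r + 1)))

/-- Homology of a chain complex in degree `r`. -/
abbrev homologyC (d : ∀ n : ℤ, C n →ₗ[κ] C (n - 1)) (r : ℤ) : Type :=
  ↥(bcycles d r) ⧸ (bbound d r).comap (bcycles d r).subtype

end CohomologyDefs

section InducedMaps

variable {C₁ C₂ : ℤ → Type}
  [∀ n, AddCommGroup (C₁ n)] [∀ n, Module κ (C₁ n)]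
  [∀ n, AddCommGroup (C₂ n)] [∀ n, Module κ (C₂ n)]

open Classical in
/-- The map induced on cohomology by a linear map `g` from the degree-`a` part of the first
complex to the degree-`b` part of the second complex.  (If `g` is not compatible with the
differentials, this is the junk value `0`.) -/
noncomputable def Hmap₂ (d₁ : ∀ n : ℤ, C₁ n →ₗ[κ] C₁ (n + 1)) (d₂ : ∀ n : ℤ, C₂ n →ₗ[κ] C₂ (n + 1))
    (a b : ℤ) (g : C₁ a →ₗ[κ] C₂ b) : cohomology d₁ a →ₗ[κ] cohomology d₂ b :=
  if h : cocycles d₁ a ≤ (cocycles d₂ b).comap g ∧ cobound d₁ a ≤ (cobound d₂ b).comap g then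
    Submodule.mapQ _ _ (g.restrict fun x hx => h.1 hx)
      (fun x hx => by
        have hg : g ↑x ∈ cobound d₂ b := h.2 hx
        simpa [Submodule.mem_comap, LinearMap.restrict_apply] using hg)
  else 0

open Classical in
/-- The map induced on homology by a linear map `g` from the degree-`a` part of the first
chain complex to the degree-`b` part of the second chain complex.  (Junk value `0` if `g` is
not compatible with the differentials.) -/
noncomputable def hMap₂ (d₁ : ∀ n : ℤ, C₁ n →ₗ[κ] C₁ (n - 1)) (d₂ : ∀ n : ℤ, C₂ n →ₗ[κ] C₂ (n - 1))
    (a b : ℤ) (g : C₁ a →ₗ[κ] C₂ b) : homologyC d₁ a →ₗ[κ] homologyC d₂ b :=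
  if h : bcycles d₁ a ≤ (bcycles d₂ b).comap g ∧ bbound d₁ a ≤ (bbound d₂ b).comap g then
    Submodule.mapQ _ _ (g.restrict fun x hx => h.1 hx)
      (fun x hx => by
        have hg : g ↑x ∈ bbound d₂ b := h.2 hx
        simpa [Submodule.mem_comap, LinearMap.restrict_apply] using hg)
  else 0

end InducedMaps

/-- A mixed complex over `κ`: non-negatively graded vector spaces with a degree `+1`
exterior differential `δ` and a degree `-1` interior differential `β` satisfying
`δδ = 0`, `ββ = 0` and `βδ + δβ = 0`. -/
structure Mixed (κ : Type) [Field κ] : Type 1 where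
  C : ℤ → Type
  [acg : ∀ n, AddCommGroup (C n)]
  [mod : ∀ n, Module κ (C n)]
  trivNeg : ∀ n : ℤ, n < 0 → Subsingleton (C n)
  δ : ∀ n : ℤ, C n →ₗ[κ] C (n + 1)
  β : ∀ n : ℤ, C n →ₗ[κ] C (n - 1)
  δδ : ∀ (n : ℤ) (x : C n), δ (n + 1) (δ n x) = 0
  ββ : ∀ (n : ℤ) (x : C n), β (n - 1) (β n x) = 0
  βδ : ∀ (n : ℤ) (x : C n),
    fcast (κ := κ) (show n + 1 - 1 = n by ring) (β (n + 1) (δ n x))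
      + fcast (κ := κ) (show n - 1 + 1 = n by ring) (δ (n - 1) (β n x)) = 0

attribute [instance] Mixed.acg Mixed.mod

/-- `^+C^r := ∏_{k ≥ 0} C^{r-2k}`. -/
abbrev plusC (M : Mixed κ) (r : ℤ) : Type := ∀ k : ℕ, M.C (r - 2 * (k : ℤ))

/-- `^-C^r := ∏_{k ≥ 0} C^{r+2k}`. -/
abbrev minusC (M : Mixed κ) (r : ℤ) : Type := ∀ k : ℕ, M.C (r + 2 * (k : ℤ))

/-- `𝕡C^r := ∏_{m ≡ r mod 2} C^m` (the components with `m < 0` are trivial). -/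
abbrev pprodC (M : Mixed κ) (r : ℤ) : Type := ∀ n : {m : ℤ // m % 2 = r % 2}, M.C n.1

/-- `PC^r := ⊕_{m ≡ r mod 2} C^m` (the components with `m < 0` are trivial). -/
abbrev pC (M : Mixed κ) (r : ℤ) : Type := ⨁ n : {m : ℤ // m % 2 = r % 2}, M.C n.1

/-- Components of the differential `^+D_β`. -/
def plusDComp (M : Mixed κ) (r : ℤ) : ∀ k : ℕ, plusC M r →ₗ[κ] M.C (r + 1 - 2 * (k : ℤ))
  | 0 =>
      (fcast (show r - 2 * ((0:ℕ) : ℤ) + 1 = r + 1 - 2 * ((0:ℕ) : ℤ) by push_cast; ring)).comp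
        ((M.δ (r - 2 * ((0:ℕ) : ℤ))).comp (LinearMap.proj 0))
  | (k + 1) =>
      (fcast (show r - 2 * ((k + 1 : ℕ) : ℤ) + 1 = r + 1 - 2 * ((k + 1 : ℕ) : ℤ) by push_cast; ring)).comp
        ((M.δ (r - 2 * ((k + 1 : ℕ) : ℤ))).comp (LinearMap.proj (k + 1)))
      + (fcast (show r - 2 * ((k : ℕ) : ℤ) - 1 = r + 1 - 2 * ((k + 1 : ℕ) : ℤ) by push_cast; ring)).comp
        ((M.β (r - 2 * ((k : ℕ) : ℤ))).comp (LinearMap.proj k))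

/-- The differential of the cochain complex `^+C_β`. -/
def plusD (M : Mixed κ) (r : ℤ) : plusC M r →ₗ[κ] plusC M (r + 1) :=
  LinearMap.pi (plusDComp M r)

/-- The differential of the chain complex `(^+C, ^+D^δ)`. -/
def plusDelta (M : Mixed κ) (r : ℤ) : plusC M r →ₗ[κ] plusC M (r - 1) :=
  LinearMap.pi fun k : ℕ =>
    (fcast (show r - 2 * ((k : ℕ) : ℤ) - 1 = r - 1 - 2 * ((k : ℕ) : ℤ) by ring)).comp
      ((M.β (r - 2 * ((k : ℕ) : ℤ))).comp (LinearMap.proj k))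
    + (fcast (show r - 2 * ((k + 1 : ℕ) : ℤ) + 1 = r - 1 - 2 * ((k : ℕ) : ℤ) by push_cast; ring)).comp
      ((M.δ (r - 2 * ((k + 1 : ℕ) : ℤ))).comp (LinearMap.proj (k + 1)))

/-- The differential of the cochain complex `^-C_β`. -/
def minusD (M : Mixed κ) (r : ℤ) : minusC M r →ₗ[κ] minusC M (r + 1) :=
  LinearMap.pi fun k : ℕ =>
    (fcast (show r + 2 * ((k + 1 : ℕ) : ℤ) - 1 = r + 1 + 2 * ((k : ℕ) : ℤ) by push_cast; ring)).comp
      ((M.β (r + 2 * ((k + 1 : ℕ) : ℤ))).comp (LinearMap.proj (k + 1)))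
    + (fcast (show r + 2 * ((k : ℕ) : ℤ) + 1 = r + 1 + 2 * ((k : ℕ) : ℤ) by ring)).comp
      ((M.δ (r + 2 * ((k : ℕ) : ℤ))).comp (LinearMap.proj k))

/-- The differential of the `2`-periodic cochain complex `𝕡C`. -/
def pprodD (M : Mixed κ) (r : ℤ) : pprodC M r →ₗ[κ] pprodC M (r + 1) :=
  LinearMap.pi fun n : {m : ℤ // m % 2 = (r + 1) % 2} =>
    (fcast (show n.1 - 1 + 1 = n.1 by ring)).comp
      ((M.δ (n.1 - 1)).comp
        (LinearMap.proj (⟨n.1 - 1, by have := n.2; omega⟩ : {m : ℤ // m % 2 = r % 2})))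
    + (fcast (show n.1 + 1 - 1 = n.1 by ring)).comp
      ((M.β (n.1 + 1)).comp
        (LinearMap.proj (⟨n.1 + 1, by have := n.2; omega⟩ : {m : ℤ // m % 2 = r % 2})))

/-- The differential of the `2`-periodic cochain complex `PC` (direct sum version). -/
noncomputable def pD (M : Mixed κ) (r : ℤ) : pC M r →ₗ[κ] pC M (r + 1) :=
  DirectSum.toModule κ {m : ℤ // m % 2 = r % 2} (pC M (r + 1)) fun n =>
    ((DirectSum.lof κ {m : ℤ // m % 2 = (r + 1) % 2} (fun m => M.C m.1)
        ⟨n.1 + 1, by have := n.2; omega⟩).comp (M.δ n.1))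
    + ((DirectSum.lof κ {m : ℤ // m % 2 = (r + 1) % 2} (fun m => M.C m.1)
        ⟨n.1 - 1, by have := n.2; omega⟩).comp (M.β n.1))

end CDGA

namespace CDGA

variable {κ : Type} [Field κ]

section MorphismInduced

variable {M₁ M₂ : Mixed κ}

/-- The map induced by a morphism of mixed complexes on `^+C`. -/
def plusMap (f : ∀ n : ℤ, M₁.C n →ₗ[κ] M₂.C n) (r : ℤ) : plusC M₁ r →ₗ[κ] plusC M₂ r :=
  LinearMap.pi fun k : ℕ => (f (r - 2 * (k : ℤ))).comp (LinearMap.proj k)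

/-- The map induced by a morphism of mixed complexes on `^-C`. -/
def minusMap (f : ∀ n : ℤ, M₁.C n →ₗ[κ] M₂.C n) (r : ℤ) : minusC M₁ r →ₗ[κ] minusC M₂ r :=
  LinearMap.pi fun k : ℕ => (f (r + 2 * (k : ℤ))).comp (LinearMap.proj k)

/-- The map induced by a morphism of mixed complexes on `𝕡C`. -/
def pprodMap (f : ∀ n : ℤ, M₁.C n →ₗ[κ] M₂.C n) (r : ℤ) : pprodC M₁ r →ₗ[κ] pprodC M₂ r :=
  LinearMap.pi fun n : {m : ℤ // m % 2 = r % 2} => (f n.1).comp (LinearMap.proj n)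

/-- The map induced by a morphism of mixed complexes on `PC`. -/
noncomputable def pMap (f : ∀ n : ℤ, M₁.C n →ₗ[κ] M₂.C n) (r : ℤ) : pC M₁ r →ₗ[κ] pC M₂ r :=
  DirectSum.toModule κ {m : ℤ // m % 2 = r % 2} (pC M₂ r) fun n =>
    (DirectSum.lof κ {m : ℤ // m % 2 = r % 2} (fun m => M₂.C m.1) n).comp (f n.1)

end MorphismInduced

/-- Components of the canonical inclusion `^+C^a → ^+C^{a+2} = ^+C^b`,
`(ω_a, ω_{a-2}, …) ↦ (0, ω_a, ω_{a-2}, …)`. -/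
def inclS2Comp (M : Mixed κ) (a b : ℤ) (h : a + 2 = b) :
    ∀ k : ℕ, plusC M a →ₗ[κ] M.C (b - 2 * (k : ℤ))
  | 0 => 0
  | (j + 1) =>
      (fcast (show a - 2 * ((j : ℕ) : ℤ) = b - 2 * ((j + 1 : ℕ) : ℤ) by push_cast; omega)).comp
        (LinearMap.proj j)

/-- The canonical inclusion `i : ^+C^a → ^+C^b` (for `b = a + 2`). -/
def inclS2 (M : Mixed κ) (a b : ℤ) (h : a + 2 = b) : plusC M a →ₗ[κ] plusC M b :=
  LinearMap.pi (inclS2Comp M a b h)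

/-- The projection `π : ^+C^r → C^r` onto the top component. -/
def topProj (M : Mixed κ) (r : ℤ) : plusC M r →ₗ[κ] M.C r :=
  (fcast (show r - 2 * ((0:ℕ) : ℤ) = r by push_cast; ring)).comp (LinearMap.proj 0)

/-- The canonical projection `^+C^a → ^+C^{a-2} = ^+C^b` dropping the top component. -/
def projS2 (M : Mixed κ) (a b : ℤ) (h : b + 2 = a) : plusC M a →ₗ[κ] plusC M b :=
  LinearMap.pi fun k : ℕ =>
    (fcast (show a - 2 * ((k + 1 : ℕ) : ℤ) = b - 2 * ((k : ℕ) : ℤ) by push_cast; omega)).comp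
      (LinearMap.proj (k + 1))

/-- The canonical inclusion `I : ^+C^{r-2} → 𝕡C^r` (placing the component of
degree `r - 2 - 2j` in degree `r - 2 - 2j`). -/
def inclPprod (M : Mixed κ) (r : ℤ) : plusC M (r - 2) →ₗ[κ] pprodC M r :=
  LinearMap.pi fun n : {m : ℤ // m % 2 = r % 2} =>
    if h : n.1 ≤ r - 2 then
      (fcast (show r - 2 - 2 * ((((r - 2 - n.1) / 2).toNat : ℕ) : ℤ) = n.1 by
          have := n.2; omega)).comp
        (LinearMap.proj (((r - 2 - n.1) / 2).toNat))
    else 0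

/-- The canonical projection `p : 𝕡C^r → ^-C^r` onto the components of degree `≥ r`. -/
def projMinus (M : Mixed κ) (r : ℤ) : pprodC M r →ₗ[κ] minusC M r :=
  LinearMap.pi fun j : ℕ =>
    LinearMap.proj (⟨r + 2 * (j : ℤ), by omega⟩ : {m : ℤ // m % 2 = r % 2})

/-- Reindexing (periodicity) isomorphism between the `2`-periodic complexes `PC^a` and
`PC^b` for `a ≡ b mod 2`. -/
noncomputable def reindexP (M : Mixed κ) (a b : ℤ) (h : a % 2 = b % 2) :
    pC M a →ₗ[κ] pC M b :=
  DirectSum.toModule κ {m : ℤ // m % 2 = a % 2} (pC M b) fun n =>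
    DirectSum.lof κ {m : ℤ // m % 2 = b % 2} (fun m => M.C m.1) ⟨n.1, by have := n.2; omega⟩

/-- The canonical map `^+C^m → PC^m` (the components of negative degree are trivial and
are sent to `0`). -/
noncomputable def inclPlusP (M : Mixed κ) (m : ℤ) : plusC M m →ₗ[κ] pC M m :=
  ∑ j ∈ Finset.range (m.toNat + 1),
    (DirectSum.lof κ {x : ℤ // x % 2 = m % 2} (fun x => M.C x.1)
        ⟨m - 2 * (j : ℤ), by omega⟩).comp
      (LinearMap.proj j)

section Psi

variable (M : Mixed κ) (Ψ : ℤ → ∀ n : ℤ, M.C n →ₗ[κ] M.C n)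

/-- The endomorphism `^+Ψ_k` of `^+C^r`: the component of degree `r - 2j` is scaled
by `k^{-j}`. -/
noncomputable def plusPsi (k : ℤ) (r : ℤ) : plusC M r →ₗ[κ] plusC M r :=
  LinearMap.pi fun j : ℕ =>
    (((k : κ)⁻¹) ^ (j : ℕ)) • ((Ψ k (r - 2 * (j : ℤ))).comp (LinearMap.proj j))

/-- The endomorphism `^-Ψ_k` of `^-C^r`: the component of degree `r + 2j` is scaled
by `k^j`. -/
noncomputable def minusPsi (k : ℤ) (r : ℤ) : minusC M r →ₗ[κ] minusC M r :=
  LinearMap.pi fun j : ℕ =>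
    ((k : κ) ^ (j : ℕ)) • ((Ψ k (r + 2 * (j : ℤ))).comp (LinearMap.proj j))

/-- The endomorphism `𝕡Ψ_k` of `𝕡C^r`: the component of degree `r + 2j` (`j ∈ ℤ`) is
scaled by `k^j`. -/
noncomputable def pprodPsi (k : ℤ) (r : ℤ) : pprodC M r →ₗ[κ] pprodC M r :=
  LinearMap.pi fun n : {m : ℤ // m % 2 = r % 2} =>
    ((k : κ) ^ ((n.1 - r) / 2)) • ((Ψ k n.1).comp (LinearMap.proj n))

end Psi

/-- The map `Φ((a_k)_k) = (a_k - S_k(a_{k+1}))_k` associated to an inverse system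
of vector spaces; its kernel is `lim` and its cokernel is `lim¹`. -/
def phiMap {A : ℕ → Type} [∀ i, AddCommGroup (A i)] [∀ i, Module κ (A i)]
    (S : ∀ i : ℕ, A (i + 1) →ₗ[κ] A i) : (∀ i, A i) →ₗ[κ] (∀ i, A i) :=
  LinearMap.pi fun i : ℕ => LinearMap.proj i - (S i).comp (LinearMap.proj (i + 1))

end CDGA

namespace CDGA

variable {κ : Type} [Field κ]

/-- The structure map `S : ^+H^δ_{a} → ^+H^δ_{a-2} = ^+H^δ_{b}` of the inverse system,
induced by the projection `^+C^a → ^+C^{a-2}` dropping the top component. -/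
noncomputable def SmapDelta (M : Mixed κ) (a b : ℤ) (h : b + 2 = a) :
    homologyC (plusDelta M) a →ₗ[κ] homologyC (plusDelta M) b :=
  hMap₂ (plusDelta M) (plusDelta M) a b (projS2 M a b h)

/-- The map `Φ` of the inverse system `A_k = ^+H^δ_{s+2k}` with structure maps induced by
the projections; `lim = ker Φ`, `lim¹ = coker Φ`. -/
noncomputable def phiDelta (M : Mixed κ) (s : ℤ) :
    (∀ k : ℕ, homologyC (plusDelta M) (s + 2 * (k : ℤ))) →ₗ[κ]
      (∀ k : ℕ, homologyC (plusDelta M) (s + 2 * (k : ℤ))) :=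
  phiMap (A := fun k : ℕ => homologyC (plusDelta M) (s + 2 * (k : ℤ)))
    (fun k : ℕ =>
      SmapDelta M (s + 2 * ((k + 1 : ℕ) : ℤ)) (s + 2 * (k : ℤ)) (by push_cast; ring))

section Helpers

variable (M : Mixed κ)

theorem fcast_rfl {ι : Type} {C : ι → Type} [∀ i, AddCommGroup (C i)] [∀ i, Module κ (C i)]
    {m : ι} (h : m = m) (x : C m) : fcast (κ := κ) h x = x := rfl

theorem fcast_fcast {ι : Type} {C : ι → Type} [∀ i, AddCommGroup (C i)] [∀ i, Module κ (C i)]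
    {m n l : ι} (h : m = n) (h' : n = l) (x : C m) :
    fcast (κ := κ) h' (fcast (κ := κ) h x) = fcast (κ := κ) (h.trans h') x := by
  subst h; subst h'; rfl

theorem delta_fcast {m n : ℤ} (h : m = n) (x : M.C m) :
    M.δ n (fcast (κ := κ) h x) =
      fcast (κ := κ) (show m + 1 = n + 1 by rw [h]) (M.δ m x) := by
  subst h; rfl

theorem beta_fcast {m n : ℤ} (h : m = n) (x : M.C m) :
    M.β n (fcast (κ := κ) h x) =
      fcast (κ := κ) (show m - 1 = n - 1 by rw [h]) (M.β m x) := by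
  subst h; rfl

/-- Two families indexed by possibly different types: casted values agree along equal indices. -/
theorem fam_cast {a : ℤ} (x : plusC M a) {k k' : ℕ} (hk : k = k') {n : ℤ}
    (h : a - 2 * (k : ℤ) = n) (h' : a - 2 * (k' : ℤ) = n) :
    fcast (κ := κ) (C := M.C) h (x k) = fcast (κ := κ) (C := M.C) h' (x k') := by
  subst hk; rfl

theorem pp_cast {s : ℤ} (x : pprodC M s) {m m' : ℤ} (hm : m % 2 = s % 2) (hm' : m' % 2 = s % 2)
    (h : m = m') :
    fcast (κ := κ) (C := M.C) h (x ⟨m, hm⟩) = x ⟨m', hm'⟩ := by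
  subst h; rfl

theorem pp_delta {s : ℤ} (x : pprodC M s) {m m' n : ℤ} (hm : m % 2 = s % 2)
    (hm' : m' % 2 = s % 2) (e : m = m') (h : m + 1 = n) (h' : m' + 1 = n) :
    fcast (κ := κ) (C := M.C) h (M.δ m (x ⟨m, hm⟩)) =
      fcast (κ := κ) (C := M.C) h' (M.δ m' (x ⟨m', hm'⟩)) := by
  subst e; rfl

theorem pp_beta {s : ℤ} (x : pprodC M s) {m m' n : ℤ} (hm : m % 2 = s % 2)
    (hm' : m' % 2 = s % 2) (e : m = m') (h : m - 1 = n) (h' : m' - 1 = n) :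
    fcast (κ := κ) (C := M.C) h (M.β m (x ⟨m, hm⟩)) =
      fcast (κ := κ) (C := M.C) h' (M.β m' (x ⟨m', hm'⟩)) := by
  subst e; rfl

/-- The differential of `^+C` with flexible target. -/
def dP (a b : ℤ) (h : b + 1 = a) : plusC M a →ₗ[κ] plusC M b :=
  LinearMap.pi fun k : ℕ =>
    (fcast (show a - 2 * ((k : ℕ) : ℤ) - 1 = b - 2 * ((k : ℕ) : ℤ) by omega)).comp
      ((M.β (a - 2 * ((k : ℕ) : ℤ))).comp (LinearMap.proj k))
    + (fcast (show a - 2 * ((k + 1 : ℕ) : ℤ) + 1 = b - 2 * ((k : ℕ) : ℤ) by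
        push_cast; omega)).comp
      ((M.δ (a - 2 * ((k + 1 : ℕ) : ℤ))).comp (LinearMap.proj (k + 1)))

theorem dP_apply (a b : ℤ) (h : b + 1 = a) (x : plusC M a) (k : ℕ) :
    dP M a b h x k =
      fcast (κ := κ) (C := M.C)
        (show a - 2 * ((k : ℕ) : ℤ) - 1 = b - 2 * ((k : ℕ) : ℤ) by omega)
        (M.β (a - 2 * ((k : ℕ) : ℤ)) (x k))
      + fcast (κ := κ) (C := M.C)
        (show a - 2 * ((k + 1 : ℕ) : ℤ) + 1 = b - 2 * ((k : ℕ) : ℤ) by push_cast; omega)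
        (M.δ (a - 2 * ((k + 1 : ℕ) : ℤ)) (x (k + 1))) := rfl

theorem mem_bcycles_iff (a b : ℤ) (h : b + 1 = a) (x : plusC M a) :
    x ∈ bcycles (plusDelta M) a ↔ dP M a b h x = 0 := by
  obtain rfl : b = a - 1 := by omega
  rfl

theorem mem_bbound_iff (a b : ℤ) (h : b + 1 = a) (y : plusC M b) :
    y ∈ bbound (plusDelta M) b ↔ ∃ x : plusC M a, dP M a b h x = y := by
  subst h
  have key : ∀ (c : ℤ) (hc : b + 1 - 1 = c) (h : c + 1 = b + 1),
      (fcast (κ := κ) (C := plusC M) hc).comp (plusDelta M (b + 1)) = dP M (b + 1) c h := by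
    intro c hc h; subst hc; rfl
  unfold bbound
  rw [key b (by ring) rfl]
  rfl

theorem dP_dP (a b c : ℤ) (h : b + 1 = a) (h' : c + 1 = b) (x : plusC M a) :
    dP M b c h' (dP M a b h x) = 0 := by
  have h1 : ∀ (m n l : ℤ) (e : m + 1 = n) (e' : n + 1 = l) (y : M.C m),
      fcast (κ := κ) (C := M.C) e' (M.δ n (fcast (κ := κ) (C := M.C) e (M.δ m y))) = 0 := by
    intro m n l e e' y; subst e; subst e'; exact M.δδ _ _
  have h2 : ∀ (m n l : ℤ) (e : m - 1 = n) (e' : n - 1 = l) (y : M.C m),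
      fcast (κ := κ) (C := M.C) e' (M.β n (fcast (κ := κ) (C := M.C) e (M.β m y))) = 0 := by
    intro m n l e e' y; subst e; subst e'; exact M.ββ _ _
  have h3 : ∀ (m n n' l : ℤ) (e : m + 1 = n) (e' : n - 1 = l) (f : m - 1 = n') (f' : n' + 1 = l)
      (y : M.C m),
      fcast (κ := κ) (C := M.C) e' (M.β n (fcast (κ := κ) (C := M.C) e (M.δ m y)))
      + fcast (κ := κ) (C := M.C) f' (M.δ n' (fcast (κ := κ) (C := M.C) f (M.β m y))) = 0 := by
    intro m n n' l e e' f f' y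
    obtain rfl : l = m := by omega
    subst e; subst f; exact M.βδ _ _
  funext k
  rw [dP_apply, dP_apply, dP_apply]
  simp only [map_add]
  rw [h2, h1, zero_add, add_zero]
  exact h3 _ _ _ _ _ _ _ _ _

theorem projS2_apply (a b : ℤ) (h : b + 2 = a) (x : plusC M a) (k : ℕ) :
    projS2 M a b h x k = fcast (κ := κ) (C := M.C)
      (show a - 2 * ((k + 1 : ℕ) : ℤ) = b - 2 * ((k : ℕ) : ℤ) by push_cast; omega)
      (x (k + 1)) := rfl

theorem projS2_dP (a b a' b' : ℤ) (h : b + 1 = a) (h' : b' + 1 = a') (ha : a' + 2 = a)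
    (hb : b' + 2 = b) (x : plusC M a) :
    projS2 M b b' hb (dP M a b h x) = dP M a' b' h' (projS2 M a a' ha x) := by
  funext k
  rw [dP_apply, projS2_apply, projS2_apply, projS2_apply, dP_apply, delta_fcast, beta_fcast]
  simp only [map_add, fcast_fcast]

theorem projS2_surj (a b : ℤ) (h : b + 2 = a) (x : plusC M b) :
    ∃ y, projS2 M a b h y = x := by
  refine ⟨inclS2 M b a h x, ?_⟩
  funext k
  rw [projS2_apply]
  change fcast (κ := κ) (C := M.C) _ (fcast (κ := κ) (C := M.C) _ (x k)) = _
  rw [fcast_fcast, fcast_rfl]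

/-- The projection from the periodic complex to `^+C^a`. -/
def piP (s a : ℤ) (h : a % 2 = s % 2) : pprodC M s →ₗ[κ] plusC M a :=
  LinearMap.pi fun k : ℕ =>
    LinearMap.proj (⟨a - 2 * (k : ℤ), by omega⟩ : {m : ℤ // m % 2 = s % 2})

theorem piP_apply (s a : ℤ) (h : a % 2 = s % 2) (x : pprodC M s) (k : ℕ) :
    piP M s a h x k = x ⟨a - 2 * (k : ℤ), by omega⟩ := rfl

theorem projS2_piP (s a b : ℤ) (h : a % 2 = s % 2) (h' : b % 2 = s % 2) (hb : b + 2 = a)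
    (x : pprodC M s) : projS2 M a b hb (piP M s a h x) = piP M s b h' x := by
  funext k
  rw [projS2_apply, piP_apply, piP_apply]
  exact pp_cast M x _ _ _

/-- The differential of the periodic complex with flexible target. -/
def dQ (s t : ℤ) (h : s + 1 = t) : pprodC M s →ₗ[κ] pprodC M t :=
  LinearMap.pi fun n : {m : ℤ // m % 2 = t % 2} =>
    (fcast (show n.1 - 1 + 1 = n.1 by ring)).comp
      ((M.δ (n.1 - 1)).comp
        (LinearMap.proj (⟨n.1 - 1, by have := n.2; omega⟩ : {m : ℤ // m % 2 = s % 2})))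
    + (fcast (show n.1 + 1 - 1 = n.1 by ring)).comp
      ((M.β (n.1 + 1)).comp
        (LinearMap.proj (⟨n.1 + 1, by have := n.2; omega⟩ : {m : ℤ // m % 2 = s % 2})))

theorem mem_cocycles_iff (s t : ℤ) (h : s + 1 = t) (x : pprodC M s) :
    x ∈ cocycles (pprodD M) s ↔ dQ M s t h x = 0 := by
  subst h
  rfl

theorem mem_cobound_iff (s t : ℤ) (h : s + 1 = t) (y : pprodC M t) :
    y ∈ cobound (pprodD M) t ↔ ∃ x : pprodC M s, dQ M s t h x = y := by
  obtain rfl : s = t - 1 := by omega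
  have key : ∀ (s c : ℤ) (hc : s + 1 = c),
      (fcast (κ := κ) (C := pprodC M) hc).comp (pprodD M s) = dQ M s c hc := by
    intro s c hc; subst hc; rfl
  unfold cobound
  rw [key]
  rfl

theorem dP_piP (s t a b : ℤ) (hs : s + 1 = t) (ha : a % 2 = s % 2) (hb : b % 2 = t % 2)
    (h : b + 1 = a) (x : pprodC M s) :
    dP M a b h (piP M s a ha x) = piP M t b hb (dQ M s t hs x) := by
  funext k
  rw [dP_apply, piP_apply, piP_apply, piP_apply, add_comm]
  refine congrArg₂ (· + ·) ?_ ?_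
  · exact pp_delta M x _ _ (by dsimp only; push_cast; omega) _ _
  · exact pp_beta M x _ _ (by dsimp only; omega) _ _

theorem piP_inj (s a : ℤ) (h : ∀ k : ℕ, (a + 2 * (k : ℤ)) % 2 = s % 2) (x y : pprodC M s)
    (hxy : ∀ k : ℕ, piP M s (a + 2 * (k : ℤ)) (h k) x = piP M s (a + 2 * (k : ℤ)) (h k) y) :
    x = y := by
  funext n
  obtain ⟨n, hn⟩ := n
  have h0 := h 0
  push_cast at h0
  have e := congrFun (hxy ((n - a) / 2).toNat)
    ((a + 2 * (((n - a) / 2).toNat : ℤ) - n) / 2).toNat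
  rw [piP_apply, piP_apply] at e
  have hm : a + 2 * (((n - a) / 2).toNat : ℤ)
      - 2 * ((((a + 2 * (((n - a) / 2).toNat : ℤ) - n) / 2).toNat : ℕ) : ℤ) = n := by omega
  rw [← pp_cast M x (by omega) hn hm, ← pp_cast M y (by omega) hn hm, e]

theorem compat_shift (a : ℤ) (x : ∀ k : ℕ, plusC M (a + 2 * (k : ℤ)))
    (hx : ∀ k : ℕ, projS2 M (a + 2 * ((k + 1 : ℕ) : ℤ)) (a + 2 * (k : ℤ))
      (by push_cast; ring) (x (k + 1)) = x k) (n : ℤ) (i k j : ℕ)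
    (h : a + 2 * ((k + i : ℕ) : ℤ) - 2 * ((j + i : ℕ) : ℤ) = n)
    (h' : a + 2 * (k : ℤ) - 2 * (j : ℤ) = n) :
    fcast (κ := κ) (C := M.C) h (x (k + i) (j + i)) = fcast (κ := κ) (C := M.C) h' (x k j) := by
  induction i with
  | zero => rfl
  | succ i ih =>
    rw [← ih (by push_cast at h ⊢; omega), ← hx (k + i), projS2_apply, fcast_fcast]
    rfl

theorem glue (s a : ℤ) (h : ∀ k : ℕ, (a + 2 * (k : ℤ)) % 2 = s % 2)
    (x : ∀ k : ℕ, plusC M (a + 2 * (k : ℤ)))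
    (hx : ∀ k : ℕ, projS2 M (a + 2 * ((k + 1 : ℕ) : ℤ)) (a + 2 * (k : ℤ))
      (by push_cast; ring) (x (k + 1)) = x k) :
    ∃ w : pprodC M s, ∀ k : ℕ, piP M s (a + 2 * (k : ℤ)) (h k) w = x k := by
  have h0 := h 0
  push_cast at h0
  refine ⟨fun n => fcast (κ := κ) (C := M.C) (show a + 2 * (((n.1 - a) / 2).toNat : ℤ)
      - 2 * ((((a - n.1) / 2).toNat : ℕ) : ℤ) = n.1 by have := n.2; omega)
      (x ((n.1 - a) / 2).toNat ((a - n.1) / 2).toNat), ?_⟩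
  intro k
  funext j
  rw [piP_apply]
  dsimp only
  have key : ∀ (n : ℤ) (k0 j0 k j : ℕ) (e : a + 2 * (k0 : ℤ) - 2 * (j0 : ℤ) = n)
      (e' : a + 2 * (k : ℤ) - 2 * (j : ℤ) = n) (_ : k0 ≤ k),
      fcast (κ := κ) (C := M.C) e (x k0 j0) = fcast (κ := κ) (C := M.C) e' (x k j) := by
    intro n k0 j0 k j e e' hk
    obtain ⟨i, rfl⟩ := Nat.exists_eq_add_of_le hk
    obtain rfl : j = j0 + i := by push_cast at e'; omega
    exact (compat_shift M a x hx n i k0 j0 e' e).symm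
  rw [key _ _ _ k j _ rfl (by dsimp only; omega), fcast_rfl]

theorem T_surj (a : ℤ) (z : ∀ k : ℕ, plusC M (a + 2 * (k : ℤ))) :
    ∃ w : ∀ k : ℕ, plusC M (a + 2 * (k : ℤ)), ∀ k : ℕ,
      w k - projS2 M (a + 2 * ((k + 1 : ℕ) : ℤ)) (a + 2 * (k : ℤ))
        (by push_cast; ring) (w (k + 1)) = z k := by
  choose L hL using fun k : ℕ => projS2_surj M (a + 2 * ((k + 1 : ℕ) : ℤ)) (a + 2 * (k : ℤ))
        (by push_cast; ring)
  refine ⟨fun k => Nat.rec (motive := fun k => plusC M (a + 2 * (k : ℤ))) 0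
    (fun k w => L k (w - z k)) k, fun k => ?_⟩
  change _ - projS2 M _ _ _ (L k (_ - z k)) = z k
  rw [hL]
  abel

/-- Class of a cycle. -/
def cls (a : ℤ) : ↥(bcycles (plusDelta M) a) →ₗ[κ] homologyC (plusDelta M) a :=
  Submodule.mkQ _

theorem cls_eq_zero_iff (a b : ℤ) (h : a + 1 = b) (x : ↥(bcycles (plusDelta M) a)) :
    cls M a x = 0 ↔ ∃ y, dP M b a h y = x.1 := by
  unfold cls
  rw [Submodule.mkQ_apply, Submodule.Quotient.mk_eq_zero, Submodule.mem_comap,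
    ← mem_bbound_iff]
  rfl

theorem proj_mem (a b : ℤ) (h : b + 2 = a) (x : plusC M a) (hx : x ∈ bcycles (plusDelta M) a) :
    projS2 M a b h x ∈ bcycles (plusDelta M) b := by
  rw [mem_bcycles_iff M a (a - 1) (by ring)] at hx
  rw [mem_bcycles_iff M b (b - 1) (by ring),
    ← projS2_dP M a (a - 1) b (b - 1) (by ring) (by ring) h (by omega), hx, map_zero]

theorem SmapDelta_cls (a b : ℤ) (h : b + 2 = a) (x : ↥(bcycles (plusDelta M) a)) :
    SmapDelta M a b h (cls M a x) = cls M b ⟨projS2 M a b h x.1, proj_mem M a b h x.1 x.2⟩ := by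
  unfold SmapDelta hMap₂
  rw [dif_pos]
  · rfl
  · refine ⟨fun x hx => proj_mem M a b h x hx, fun x hx => ?_⟩
    rw [Submodule.mem_comap]
    rw [mem_bbound_iff M (a + 1) a rfl] at hx
    obtain ⟨y, rfl⟩ := hx
    rw [mem_bbound_iff M (b + 1) b rfl]
    exact ⟨projS2 M (a + 1) (b + 1) (by omega) y, (projS2_dP M _ _ _ _ _ _ _ _ y).symm⟩

theorem phiDelta_apply (s : ℤ) (z : ∀ k : ℕ, homologyC (plusDelta M) (s + 2 * (k : ℤ))) (k : ℕ) :
    phiDelta M s z k = z k - SmapDelta M (s + 2 * ((k + 1 : ℕ) : ℤ)) (s + 2 * (k : ℤ))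
      (by push_cast; ring) (z (k + 1)) := rfl

theorem phiDelta_cls (s : ℤ) (u : ∀ k : ℕ, ↥(bcycles (plusDelta M) (s + 2 * (k : ℤ)))) (k : ℕ) :
    phiDelta M s (fun k => cls M _ (u k)) k =
      cls M _ (u k - ⟨projS2 M (s + 2 * ((k + 1 : ℕ) : ℤ)) (s + 2 * (k : ℤ))
        (by push_cast; ring) (u (k + 1)).1, proj_mem M _ _ _ _ (u (k + 1)).2⟩) := by
  rw [phiDelta_apply, SmapDelta_cls, map_sub]

theorem exists_rep (s : ℤ) (z : ∀ k : ℕ, homologyC (plusDelta M) (s + 2 * (k : ℤ))) :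
    ∃ u : ∀ k : ℕ, ↥(bcycles (plusDelta M) (s + 2 * (k : ℤ))), z = fun k => cls M _ (u k) := by
  choose u hu using fun k => Submodule.mkQ_surjective _ (z k)
  exact ⟨u, funext fun k => (hu k).symm⟩

theorem abs_map {W A B : Type} [AddCommGroup W] [Module κ W] [AddCommGroup A] [Module κ A]
    [AddCommGroup B] [Module κ B] (p : W →ₗ[κ] A) (q : W →ₗ[κ] B) (hp : Function.Surjective p)
    (h : ∀ w, p w = 0 ↔ q w = 0) :
    ∃ f : A →ₗ[κ] B, Function.Injective f ∧ LinearMap.range f = LinearMap.range q := by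
  obtain ⟨σ, hσ⟩ := p.exists_rightInverse_of_surjective (LinearMap.range_eq_top.2 hp)
  have hσ' : ∀ a, p (σ a) = a := fun a => LinearMap.congr_fun hσ a
  have hq : ∀ w, q (σ (p w)) = q w := fun w => by
    rw [← sub_eq_zero, ← map_sub, ← h, map_sub, hσ', sub_self]
  refine ⟨q.comp σ, ?_, ?_⟩
  · rw [← LinearMap.ker_eq_bot, LinearMap.ker_eq_bot']
    intro a ha
    rw [← hσ' a]
    exact (h _).2 ha
  · apply le_antisymm
    · rintro _ ⟨a, rfl⟩; exact ⟨σ a, rfl⟩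
    · rintro _ ⟨w, rfl⟩; exact ⟨p w, hq w⟩

/-- Class of a cocycle. -/
def ccls (s : ℤ) : ↥(cocycles (pprodD M) s) →ₗ[κ] cohomology (pprodD M) s :=
  Submodule.mkQ _

theorem ccls_eq_zero_iff (s t : ℤ) (h : s + 1 = t) (x : ↥(cocycles (pprodD M) t)) :
    ccls M t x = 0 ↔ ∃ y, dQ M s t h y = x.1 := by
  unfold ccls
  rw [Submodule.mkQ_apply, Submodule.Quotient.mk_eq_zero, Submodule.mem_comap,
    ← mem_cobound_iff]
  rfl

theorem piP_mem (s a : ℤ) (h : a % 2 = s % 2) (x : pprodC M s)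
    (hx : x ∈ cocycles (pprodD M) s) : piP M s a h x ∈ bcycles (plusDelta M) a := by
  rw [mem_cocycles_iff M s (s + 1) rfl] at hx
  rw [mem_bcycles_iff M a (a - 1) (by ring), dP_piP M s (s + 1) a (a - 1) rfl h (by omega),
    hx, map_zero]

/-- The map from cocycles to the product of homologies. -/
def g0 (r : ℤ) : ↥(cocycles (pprodD M) r) →ₗ[κ]
    (∀ k : ℕ, homologyC (plusDelta M) (r + 2 * (k : ℤ))) :=
  LinearMap.pi fun k => (cls M _).comp
    ((piP M r (r + 2 * (k : ℤ)) (by omega)).restrict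
      (fun x hx => piP_mem M r _ _ x hx))

theorem g0_apply (r : ℤ) (x : ↥(cocycles (pprodD M) r)) (k : ℕ) :
    g0 M r x k = cls M _ ⟨piP M r (r + 2 * (k : ℤ)) (by omega) x.1, piP_mem M r _ _ _ x.2⟩ := rfl

theorem g0_mem (r : ℤ) (x : ↥(cocycles (pprodD M) r)) :
    g0 M r x ∈ LinearMap.ker (phiDelta M r) := by
  rw [LinearMap.mem_ker]
  funext k
  rw [phiDelta_apply, g0_apply, g0_apply, SmapDelta_cls]
  have key : ∀ (a : ℤ) (x y : ↥(bcycles (plusDelta M) a)), x.1 = y.1 →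
      cls M a x - cls M a y = 0 := by
    intro a x y h
    rw [Subtype.ext h, sub_self]
  exact key _ _ _ (projS2_piP M r _ _ _ (by omega) _ _).symm

theorem g0_eq_zero_iff (r : ℤ) (x : ↥(cocycles (pprodD M) r)) :
    g0 M r x = 0 ↔ ∀ k : ℕ, ∃ y : plusC M (r + 2 * (k : ℤ) + 1),
      dP M _ _ rfl y = piP M r (r + 2 * (k : ℤ)) (by omega) x.1 := by
  rw [funext_iff]
  refine forall_congr' fun k => ?_
  rw [g0_apply]
  exact cls_eq_zero_iff M _ _ rfl _

theorem g0_surj (r : ℤ) (z : ∀ k : ℕ, homologyC (plusDelta M) (r + 2 * (k : ℤ)))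
    (hz : phiDelta M r z = 0) : ∃ x, g0 M r x = z := by
  obtain ⟨u, rfl⟩ := exists_rep M r z
  have hv := fun k => congrFun hz k
  simp only [phiDelta_cls] at hv
  simp only [Pi.zero_apply] at hv
  have hv' := fun k : ℕ => (cls_eq_zero_iff M _ (r + 1 + 2 * (k : ℤ)) (by ring) _).1 (hv k)
  choose v hv using hv'
  obtain ⟨y, hy⟩ := T_surj M (r + 1) v
  obtain ⟨w, hw⟩ := glue M r r (fun k => by omega)
    (fun k => (u k).1 - dP M (r + 1 + 2 * (k : ℤ)) _ (by ring) (y k)) (by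
      intro k
      have e := hv k
      rw [← hy k, map_sub] at e
      rw [map_sub, projS2_dP M _ _ (r + 1 + 2 * (k : ℤ)) _ _ (by ring) (by push_cast; ring)]
      change _ = (u k).1 - projS2 M _ _ _ (u (k + 1)).1 at e
      rw [sub_eq_sub_iff_add_eq_add] at e ⊢
      exact (add_comm _ _).trans e)
  have hwc : w ∈ cocycles (pprodD M) r := by
    rw [mem_cocycles_iff M r (r + 1) rfl]
    apply piP_inj M (r + 1) (r - 1) (fun k => by omega)
    intro k
    rw [← dP_piP M r (r + 1) (r + 2 * (k : ℤ)) _ rfl (by omega) _ (by ring), hw, map_zero,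
      map_sub, dP_dP, sub_zero]
    exact (mem_bcycles_iff M _ _ _ _).1 (u k).2
  refine ⟨⟨w, hwc⟩, ?_⟩
  funext k
  rw [g0_apply, ← sub_eq_zero, ← map_sub, cls_eq_zero_iff M _ (r + 1 + 2 * (k : ℤ)) (by ring)]
  refine ⟨- y k, ?_⟩
  change _ = piP M _ _ _ w - (u k).1
  rw [hw, map_neg]
  abel

theorem g0_le (r : ℤ) : (cobound (pprodD M) r).comap (cocycles (pprodD M) r).subtype ≤
    LinearMap.ker (g0 M r) := by
  intro x hx
  rw [LinearMap.mem_ker, g0_eq_zero_iff]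
  intro k
  replace hx : x.1 ∈ cobound (pprodD M) r := hx
  rw [mem_cobound_iff M (r - 1) r (by ring)] at hx
  obtain ⟨y, hy⟩ := hx
  refine ⟨piP M (r - 1) _ (by omega) y, ?_⟩
  rw [dP_piP M (r - 1) r _ _ (by ring) _ (by omega), hy]

/-- The map from cohomology to the product of homologies. -/
def g1 (r : ℤ) : cohomology (pprodD M) r →ₗ[κ]
    (∀ k : ℕ, homologyC (plusDelta M) (r + 2 * (k : ℤ))) :=
  Submodule.liftQ ((cobound (pprodD M) r).comap (cocycles (pprodD M) r).subtype) (g0 M r)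
    (g0_le M r)

theorem g1_mem (r : ℤ) (c : cohomology (pprodD M) r) :
    g1 M r c ∈ LinearMap.ker (phiDelta M r) := by
  obtain ⟨x, rfl⟩ : ∃ x, ccls M r x = c := Submodule.mkQ_surjective _ c
  exact g0_mem M r x

/-- The map from cohomology to the limit. -/
noncomputable def gMap (r : ℤ) :
    cohomology (pprodD M) r →ₗ[κ] ↥(LinearMap.ker (phiDelta M r)) :=
  (g1 M r).codRestrict (LinearMap.ker (phiDelta M r)) (g1_mem M r)

theorem gMap_ccls (r : ℤ) (x : ↥(cocycles (pprodD M) r)) :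
    (gMap M r (ccls M r x)).1 = g0 M r x := rfl

/-- The correspondence computing the connecting map. -/
def Wsub (r : ℤ) : Submodule κ ((∀ k : ℕ, plusC M (r - 1 + 2 * (k : ℤ))) × pprodC M r) where
  carrier := {w | ∀ k : ℕ, dP M (r - 1 + 2 * (k : ℤ)) (r - 2 + 2 * (k : ℤ)) (by ring) (w.1 k)
    = piP M r (r - 2 + 2 * (k : ℤ)) (by omega) w.2}
  add_mem' := by
    intro a b ha hb k
    have h1 := ha k
    have h2 := hb k
    change dP M _ _ _ (a.1 k + b.1 k) = piP M _ _ _ (a.2 + b.2)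
    rw [map_add, map_add, h1, h2]
  zero_mem' := by
    intro k
    change dP M _ _ _ 0 = piP M _ _ _ 0
    rw [map_zero, map_zero]
  smul_mem' := by
    intro c a ha k
    have h1 := ha k
    change dP M _ _ _ (c • a.1 k) = piP M _ _ _ (c • a.2)
    rw [map_smul, map_smul, h1]

theorem W_cocycle (r : ℤ) (w : ↥(Wsub M r)) : w.1.2 ∈ cocycles (pprodD M) r := by
  rw [mem_cocycles_iff M r (r + 1) rfl]
  apply piP_inj M (r + 1) (r - 3) (fun k => by omega)
  intro k
  rw [← dP_piP M r (r + 1) (r - 2 + 2 * (k : ℤ)) _ rfl (by omega) _ (by ring), ← w.2 k,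
    dP_dP, map_zero]

/-- Telescoping difference on chains. -/
def Tk (s : ℤ) (k : ℕ) : (∀ k : ℕ, plusC M (s + 2 * (k : ℤ))) →ₗ[κ] plusC M (s + 2 * (k : ℤ)) :=
  LinearMap.proj (R := κ) (φ := fun k : ℕ => plusC M (s + 2 * (k : ℤ))) k - (projS2 M (s + 2 * ((k + 1 : ℕ) : ℤ)) (s + 2 * (k : ℤ))
        (by push_cast; ring)).comp
      (LinearMap.proj (R := κ) (φ := fun k : ℕ => plusC M (s + 2 * (k : ℤ))) (k + 1))

theorem Tk_apply (s : ℤ) (k : ℕ) (w : ∀ k : ℕ, plusC M (s + 2 * (k : ℤ))) :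
    Tk M s k w = w k - projS2 M (s + 2 * ((k + 1 : ℕ) : ℤ)) (s + 2 * (k : ℤ))
        (by push_cast; ring) (w (k + 1)) := rfl

theorem W_cycle (r : ℤ) (w : ↥(Wsub M r)) (k : ℕ) :
    Tk M (r - 1) k w.1.1 ∈ bcycles (plusDelta M) (r - 1 + 2 * (k : ℤ)) := by
  rw [mem_bcycles_iff M _ (r - 2 + 2 * (k : ℤ)) (by ring), Tk_apply, map_sub, w.2 k,
    ← projS2_dP M _ (r - 2 + 2 * ((k + 1 : ℕ) : ℤ)) _ _ (by ring) _ _ (by push_cast; ring),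
    w.2 (k + 1), projS2_piP M r _ _ _ (by omega), sub_self]

/-- The map to the product of homologies. -/
def p0 (r : ℤ) : ↥(Wsub M r) →ₗ[κ] (∀ k : ℕ, homologyC (plusDelta M) (r - 1 + 2 * (k : ℤ))) :=
  LinearMap.pi fun k => (cls M _).comp
    (((Tk M (r - 1) k).comp ((LinearMap.fst κ _ _).comp (Wsub M r).subtype)).codRestrict _
      (fun w => W_cycle M r w k))

theorem p0_apply (r : ℤ) (w : ↥(Wsub M r)) (k : ℕ) :
    p0 M r w k = cls M _ ⟨Tk M (r - 1) k w.1.1, W_cycle M r w k⟩ := rfl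

/-- The map to cohomology. -/
def qMap (r : ℤ) : ↥(Wsub M r) →ₗ[κ] cohomology (pprodD M) r :=
  (ccls M r).comp (((LinearMap.snd κ _ _).comp (Wsub M r).subtype).codRestrict _
    (fun w => W_cocycle M r w))

theorem qMap_apply (r : ℤ) (w : ↥(Wsub M r)) :
    qMap M r w = ccls M r ⟨w.1.2, W_cocycle M r w⟩ := rfl

theorem p0_surj (r : ℤ) : Function.Surjective (p0 M r) := by
  intro z
  obtain ⟨u, rfl⟩ := exists_rep M _ z
  obtain ⟨w, hw⟩ := T_surj M (r - 1) (fun k => (u k).1)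
  obtain ⟨ω, hω⟩ := glue M r (r - 2) (fun k => by omega)
    (fun k => dP M (r - 1 + 2 * (k : ℤ)) (r - 2 + 2 * (k : ℤ)) (by ring) (w k)) (by
      intro k
      rw [projS2_dP M _ _ (r - 1 + 2 * (k : ℤ)) _ _ (by ring) (by push_cast; ring)]
      symm
      rw [← sub_eq_zero, ← map_sub, hw]
      exact (mem_bcycles_iff M _ _ _ _).1 (u k).2)
  refine ⟨⟨(w, ω), fun k => (hω k).symm⟩, ?_⟩
  funext k
  rw [p0_apply]
  congr 1
  exact Subtype.ext (hw k)

theorem p_iff_q (r : ℤ) (w : ↥(Wsub M r)) :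
    p0 M r w ∈ LinearMap.range (phiDelta M (r - 1)) ↔ qMap M r w = 0 := by
  rw [qMap_apply, ccls_eq_zero_iff M (r - 1) r (by ring)]
  constructor
  · rintro ⟨z, hz⟩
    obtain ⟨u, rfl⟩ := exists_rep M _ z
    have h1 : ∀ k : ℕ, ∃ v : plusC M (r + 2 * (k : ℤ)),
        dP M _ (r - 1 + 2 * (k : ℤ)) (by ring) v = Tk M (r - 1) k w.1.1
          - Tk M (r - 1) k (fun k => (u k).1) := by
      intro k
      have e := congrFun hz k
      rw [phiDelta_cls, p0_apply, eq_comm, ← sub_eq_zero, ← map_sub,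
        cls_eq_zero_iff M _ (r + 2 * (k : ℤ)) (by ring)] at e
      exact e
    choose v hv using h1
    obtain ⟨y, hy⟩ := T_surj M r v
    obtain ⟨η, hη⟩ := glue M (r - 1) (r - 1) (fun k => by omega)
      (fun k => w.1.1 k - (u k).1 - dP M (r + 2 * (k : ℤ)) _ (by ring) (y k)) (by
        intro k
        have e := hv k
        rw [← hy k, map_sub, Tk_apply, Tk_apply] at e
        rw [map_sub, map_sub, projS2_dP M _ _ (r + 2 * (k : ℤ)) _ _ (by ring) (by push_cast; ring)]
        rw [sub_eq_iff_eq_add] at e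
        rw [e]
        abel)
    refine ⟨η, ?_⟩
    apply piP_inj M r (r - 2) (fun k => by omega)
    intro k
    rw [← dP_piP M (r - 1) r (r - 1 + 2 * (k : ℤ)) _ _ (by omega) _ (by ring), hη, ← w.2 k,
      map_sub, map_sub, dP_dP, sub_zero, (mem_bcycles_iff M _ _ _ _).1 (u k).2, sub_zero]
  · rintro ⟨η, hη⟩
    refine ⟨fun k => cls M _ ⟨w.1.1 k - piP M (r - 1) _ (by omega) η, ?_⟩, ?_⟩
    · rw [mem_bcycles_iff M _ (r - 2 + 2 * (k : ℤ)) (by ring), map_sub, w.2 k,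
        dP_piP M (r - 1) r _ _ (by ring) _ (by omega), hη, sub_self]
    · funext k
      rw [phiDelta_cls, p0_apply]
      congr 1
      apply Subtype.ext
      change w.1.1 k - piP M _ _ _ η - projS2 M _ _ _ (w.1.1 (k + 1) - piP M _ _ _ η)
        = Tk M (r - 1) k w.1.1
      rw [map_sub, projS2_piP M (r - 1) _ _ _ (by omega), Tk_apply]
      abel

theorem range_q (r : ℤ) : LinearMap.range (qMap M r) = LinearMap.ker (gMap M r) := by
  ext c
  rw [LinearMap.mem_ker]
  constructor
  · rintro ⟨w, rfl⟩
    apply Subtype.ext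
    rw [qMap_apply, gMap_ccls]
    change g0 M r _ = 0
    funext k
    rw [g0_apply]
    refine (cls_eq_zero_iff M _ (r + 2 * (k : ℤ) + 1) (by ring) _).2 ?_
    have key : ∀ (a b : ℤ) (_ : a = r - 1 + 2 * ((k + 1 : ℕ) : ℤ))
        (_ : b = r - 2 + 2 * ((k + 1 : ℕ) : ℤ)) (h : b + 1 = a) (hb : b % 2 = r % 2),
        ∃ y, dP M a b h y = piP M r b hb w.1.2 := by
      intro a b ha hb h h'
      subst ha; subst hb
      exact ⟨_, w.2 (k + 1)⟩
    exact key _ _ (by push_cast; ring) (by push_cast; ring) _ _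
  · obtain ⟨x, rfl⟩ : ∃ x, ccls M r x = c := Submodule.mkQ_surjective _ c
    intro h
    have h' : g0 M r x = 0 := by rw [← gMap_ccls, h]; rfl
    rw [g0_eq_zero_iff] at h'
    choose y hy using h'
    refine ⟨⟨(fun k => projS2 M _ _ (by ring) (y k), x.1), fun k => ?_⟩, rfl⟩
    change dP M _ _ _ (projS2 M _ _ _ (y k)) = piP M _ _ _ x.1
    rw [← projS2_dP M _ (r + 2 * (k : ℤ)) _ _ rfl _ _ (by ring), hy,
      projS2_piP M r _ _ _ (by omega)]

end Helpers

/-- for every `r` there is a short exact sequence of `κ`-vector spaces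
`0 → lim¹_k ^+H^δ_{r-1+2k} → 𝕡H^r → lim_k ^+H^δ_{r+2k} → 0`, where `lim = ker Φ` and
`lim¹ = coker Φ` for `Φ((a_k)) = (a_k - S(a_{k+1}))`. -/
theorem statement1 (κ : Type) [Field κ] (M : Mixed κ) (r : ℤ) :
    ∃ (f : ((∀ k : ℕ, homologyC (plusDelta M) (r - 1 + 2 * (k : ℤ))) ⧸
              LinearMap.range (phiDelta M (r - 1))) →ₗ[κ] cohomology (pprodD M) r)
      (g : cohomology (pprodD M) r →ₗ[κ] ↥(LinearMap.ker (phiDelta M r))),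
      Function.Injective f ∧ Function.Surjective g ∧ LinearMap.range f = LinearMap.ker g := by
  have hp : Function.Surjective
      ((Submodule.mkQ (LinearMap.range (phiDelta M (r - 1)))).comp (p0 M r)) :=
    (Submodule.mkQ_surjective _).comp (p0_surj M r)
  obtain ⟨f, hf, hr⟩ := abs_map _ (qMap M r) hp (fun w => by
    rw [← p_iff_q, LinearMap.comp_apply, Submodule.mkQ_apply, Submodule.Quotient.mk_eq_zero])
  refine ⟨f, gMap M r, hf, ?_, hr.trans (range_q M r)⟩
  rintro ⟨z, hz⟩
  obtain ⟨x, hx⟩ := g0_surj M r z hz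
  exact ⟨ccls M r x, Subtype.ext hx⟩

end CDGA
end

section
/- Let f : (C₁, δ₁, β₁) → (C₂, δ₂, β₂) be a morphism of mixed complexes over κ. If the induced map H_n(f) : H_n(C₁, β₁) → H_n(C₂, β₂) on the homology of the chain complexes (C_i, β_i) is an isomorphism for every n, then the induced maps ^+H^δ_r(f) : ^+H^δ_r(C₁) → ^+H^δ_r(C₂) and 𝕡H^r(f) : 𝕡H^r(C₁) → 𝕡H^r(C₂) are isomorphisms for every r. -/
open LinearMap DirectSum

namespace CDGA

section Helpers

/-- Abstract filtered acyclicity lemma. -/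
theorem abstract_solve {T : Type} [AddCommGroup T] (V : ℤ → AddSubgroup T) (b d : T →+ T)
    (hneg : ∀ n < 0, V n = ⊤)
    (glue : ∀ g : ℤ → T, ∃ t, ∀ n, t - g n ∈ V n)
    (hb : ∀ n t, t ∈ V n → b t ∈ V (n - 1))
    (hd : ∀ n t, t ∈ V n → d t ∈ V (n + 1))
    (hdd : ∀ t, d (d t) = 0) (hbd : ∀ t, b (d t) + d (b t) = 0)
    (hac : ∀ n z, b z ∈ V (n - 1) → ∃ y, b y - z ∈ V n) (w : T) :
    ∃ e, ∀ N : ℤ, (∀ m < N, d w + b w ∈ V m) → ∀ m ≤ N, d e + b e - w ∈ V m := by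
  have step : ∀ (k : ℕ) (t : T), ∃ t', (∀ m : ℤ, m ≠ k → t' - t ∈ V m) ∧
      (b (w - d t) ∈ V ((k : ℤ) - 1 - 1) → b t' - (w - d t) ∈ V ((k : ℤ) - 1)) := by
    intro k t
    by_cases h : b (w - d t) ∈ V ((k : ℤ) - 1 - 1)
    · obtain ⟨y, hy⟩ := hac _ _ h
      obtain ⟨t', ht'⟩ := glue (fun m => if m = k then y else t)
      refine ⟨t', fun m hm => ?_, fun _ => ?_⟩
      · simpa [hm] using ht' m
      · have h1 : t' - y ∈ V k := by simpa using ht' k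
        have h2 := add_mem (hb _ _ h1) hy
        rw [map_sub] at h2
        convert h2 using 1
        abel
    · exact ⟨t, fun m _ => by simp [zero_mem], fun h' => absurd h' h⟩
  choose F hF1 hF2 using step
  let s : ℕ → T := fun k => Nat.rec 0 (fun k t => F k t) k
  have hs : ∀ k, s (k + 1) = F k (s k) := fun k => rfl
  obtain ⟨e, he⟩ := glue (fun m => s (m.toNat + 1))
  have hek : ∀ (m : ℤ) (j : ℕ), e - s (m.toNat + 1 + j) ∈ V m := by
    intro m j
    by_cases hm : m < 0
    · rw [hneg m hm]; trivial
    induction j with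
    | zero => exact he m
    | succ j ih =>
      have h1 := hF1 (m.toNat + 1 + j) (s (m.toNat + 1 + j)) m (by omega)
      rw [← hs] at h1
      have h2 := sub_mem ih h1
      convert h2 using 1
      rw [← add_assoc]
      abel
  have hek' : ∀ (m : ℤ) (j : ℕ), m < j → e - s j ∈ V m := by
    intro m j hj
    by_cases hm : m < 0
    · rw [hneg m hm]; trivial
    have := hek m (j - (m.toNat + 1))
    rwa [show m.toNat + 1 + (j - (m.toNat + 1)) = j by omega] at this
  have key : ∀ n : ℤ, b (w - d e) ∈ V (n - 1) → d e + b e - w ∈ V n := by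
    intro n hn
    by_cases hn0 : n < 0
    · rw [hneg n hn0]; trivial
    obtain ⟨k, rfl⟩ : ∃ k : ℕ, n = (k : ℤ) - 1 := ⟨n.toNat + 1, by omega⟩
    have a1 := hek' ((k : ℤ) - 1 - 1) k (by omega)
    have a2 := hd _ _ a1
    rw [show (k : ℤ) - 1 - 1 + 1 = k - 1 by ring] at a2
    have a3 := hb _ _ a2
    have a4 : b (w - d (s k)) ∈ V ((k : ℤ) - 1 - 1) := by
      have := add_mem hn a3
      convert this using 1
      simp only [map_sub]; abel
    have a5 := hF2 k (s k) a4
    rw [← hs] at a5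
    have a6 := hb _ _ (hek' (k : ℤ) (k + 1) (by push_cast; omega))
    have := add_mem (add_mem a5 a6) a2
    convert this using 1
    simp only [map_sub]; abel
  refine ⟨e, fun N hN => ?_⟩
  have main : ∀ j : ℕ, ∀ m : ℤ, m < j → m ≤ N → d e + b e - w ∈ V m := by
    intro j
    induction j with
    | zero => intro m hm _; rw [hneg m (by simpa using hm)]; trivial
    | succ j ih =>
      intro m hm hmN
      apply key
      by_cases hm0 : m - 1 < 0
      · rw [hneg _ hm0]; trivial
      have h1 := ih (m - 1 - 1) (by push_cast at hm; omega) (by omega)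
      have h2 := hd _ _ h1
      rw [show m - 1 - 1 + 1 = m - 1 by ring] at h2
      have h3 := hN (m - 1) (by omega)
      have h5 := add_mem h2 h3
      convert h5 using 1
      have hh := eq_neg_of_add_eq_zero_left (hbd e)
      simp only [map_sub, map_add, hdd]
      rw [hh]
      abel
  intro m hm
  exact main (m.toNat + 1) m (by push_cast; omega) hm

variable {κ : Type} [Field κ]

/-- The product of all components. -/
abbrev Tot (M : Mixed κ) : Type := ∀ n : ℤ, M.C n

def bh (M : Mixed κ) : Tot M →ₗ[κ] Tot M :=
  LinearMap.pi fun n => (fcast (show n + 1 - 1 = n by ring)).comp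
    ((M.β (n + 1)).comp (LinearMap.proj (n + 1)))

def dh (M : Mixed κ) : Tot M →ₗ[κ] Tot M :=
  LinearMap.pi fun n => (fcast (show n - 1 + 1 = n by ring)).comp
    ((M.δ (n - 1)).comp (LinearMap.proj (n - 1)))

theorem fcast_β (M : Mixed κ) (w : Tot M) {a b c : ℤ} (h : a = c) (h1 : a - 1 = b)
    (h2 : c - 1 = b) :
    (fcast (κ := κ) (C := M.C) h1) (M.β a (w a)) = (fcast (κ := κ) (C := M.C) h2) (M.β c (w c)) := by
  subst h; rfl

theorem fcast_δ (M : Mixed κ) (w : Tot M) {a b c : ℤ} (h : a = c) (h1 : a + 1 = b)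
    (h2 : c + 1 = b) :
    (fcast (κ := κ) (C := M.C) h1) (M.δ a (w a)) = (fcast (κ := κ) (C := M.C) h2) (M.δ c (w c)) := by
  subst h; rfl

theorem bh_apply (M : Mixed κ) (w : Tot M) (n : ℤ) :
    bh M w n = (fcast (κ := κ) (C := M.C) (show n + 1 - 1 = n by ring)) (M.β (n + 1) (w (n + 1))) := rfl

theorem dh_apply (M : Mixed κ) (w : Tot M) (n : ℤ) :
    dh M w n = (fcast (κ := κ) (C := M.C) (show n - 1 + 1 = n by ring)) (M.δ (n - 1) (w (n - 1))) := rfl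

theorem bh_pred (M : Mixed κ) (w : Tot M) (n : ℤ) : bh M w (n - 1) = M.β n (w n) := by
  rw [bh_apply, fcast_β M w (show n - 1 + 1 = n by ring) _ rfl]; rfl

theorem dh_succ (M : Mixed κ) (w : Tot M) (n : ℤ) : dh M w (n + 1) = M.δ n (w n) := by
  rw [dh_apply, fcast_δ M w (show n + 1 - 1 = n by ring) _ rfl]; rfl

theorem dh_dh (M : Mixed κ) (w : Tot M) : dh M (dh M w) = 0 := by
  funext m
  obtain ⟨n, rfl⟩ : ∃ n, m = n + 1 + 1 := ⟨m - 2, by ring⟩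
  rw [dh_succ, dh_succ, M.δδ]; rfl

theorem bh_dh (M : Mixed κ) (w : Tot M) : bh M (dh M w) + dh M (bh M w) = 0 := by
  funext n
  rw [Pi.add_apply, bh_apply, dh_apply M (bh M w), dh_succ, bh_pred, M.βδ]; rfl

theorem bh_bh (M : Mixed κ) (w : Tot M) : bh M (bh M w) = 0 := by
  funext m
  obtain ⟨n, rfl⟩ : ∃ n, m = n - 1 - 1 := ⟨m + 2, by ring⟩
  rw [bh_pred, bh_pred, M.ββ]; rfl

variable {M₁ M₂ : Mixed κ}

def fh (f : ∀ n : ℤ, M₁.C n →ₗ[κ] M₂.C n) : Tot M₁ →ₗ[κ] Tot M₂ :=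
  LinearMap.pi fun n => (f n).comp (LinearMap.proj n)

theorem fh_apply (f : ∀ n : ℤ, M₁.C n →ₗ[κ] M₂.C n) (w : Tot M₁) (n : ℤ) :
    fh f w n = f n (w n) := rfl

theorem bh_fh (f : ∀ n : ℤ, M₁.C n →ₗ[κ] M₂.C n)
    (hβ : ∀ (n : ℤ) (x : M₁.C n), M₂.β n (f n x) = f (n - 1) (M₁.β n x)) (w : Tot M₁) :
    bh M₂ (fh f w) = fh f (bh M₁ w) := by
  funext m
  obtain ⟨n, rfl⟩ : ∃ n, m = n - 1 := ⟨m + 1, by ring⟩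
  rw [bh_pred, fh_apply, fh_apply, bh_pred, hβ]

theorem dh_fh (f : ∀ n : ℤ, M₁.C n →ₗ[κ] M₂.C n)
    (hδ : ∀ (n : ℤ) (x : M₁.C n), M₂.δ n (f n x) = f (n + 1) (M₁.δ n x)) (w : Tot M₁) :
    dh M₂ (fh f w) = fh f (dh M₁ w) := by
  funext m
  obtain ⟨n, rfl⟩ : ∃ n, m = n + 1 := ⟨m - 1, by ring⟩
  rw [dh_succ, fh_apply, fh_apply, dh_succ, hδ]

/-- Filtration-type subgroups of the cone. -/
def coneV (M₁ M₂ : Mixed κ) (n : ℤ) : AddSubgroup (Tot M₁ × Tot M₂) where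
  carrier := {p | p.1 (n - 1) = 0 ∧ p.2 n = 0}
  zero_mem' := ⟨rfl, rfl⟩
  add_mem' := by
    rintro p q ⟨h1, h2⟩ ⟨h3, h4⟩
    exact ⟨by simp [h1, h3], by simp [h2, h4]⟩
  neg_mem' := by
    rintro p ⟨h1, h2⟩
    exact ⟨by simp [h1], by simp [h2]⟩

theorem mem_coneV {n : ℤ} {p : Tot M₁ × Tot M₂} :
    p ∈ coneV M₁ M₂ n ↔ p.1 (n - 1) = 0 ∧ p.2 n = 0 := Iff.rfl

def coneB (f : ∀ n : ℤ, M₁.C n →ₗ[κ] M₂.C n) : Tot M₁ × Tot M₂ →+ Tot M₁ × Tot M₂ where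
  toFun p := (-bh M₁ p.1, bh M₂ p.2 + fh f p.1)
  map_zero' := by simp
  map_add' p q := by
    ext1
    · simp only [Prod.fst_add, map_add]; abel
    · simp only [Prod.fst_add, Prod.snd_add, map_add]; abel

def coneD (M₁ M₂ : Mixed κ) : Tot M₁ × Tot M₂ →+ Tot M₁ × Tot M₂ where
  toFun p := (-dh M₁ p.1, dh M₂ p.2)
  map_zero' := by simp
  map_add' p q := by
    ext1
    · simp only [Prod.fst_add, map_add]; abel
    · simp only [Prod.snd_add, map_add]

theorem cone_solve (f : ∀ n : ℤ, M₁.C n →ₗ[κ] M₂.C n)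
    (hδ : ∀ (n : ℤ) (x : M₁.C n), M₂.δ n (f n x) = f (n + 1) (M₁.δ n x))
    (hβ : ∀ (n : ℤ) (x : M₁.C n), M₂.β n (f n x) = f (n - 1) (M₁.β n x))
    (hinj : ∀ n (x : Tot M₁) (y : Tot M₂), bh M₁ x (n - 1) = 0 → fh f x n = bh M₂ y n →
      ∃ u, x n = bh M₁ u n)
    (hsurj : ∀ n (y : Tot M₂), bh M₂ y (n - 1) = 0 →
      ∃ x v, bh M₁ x (n - 1) = 0 ∧ y n = fh f x n + bh M₂ v n)
    (x : Tot M₁) (y : Tot M₂) :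
    ∃ (u : Tot M₁) (v : Tot M₂), ∀ N : ℤ,
      (∀ m < N, (dh M₁ x + bh M₁ x) (m - 1) = 0 ∧ (dh M₂ y + bh M₂ y + fh f x) m = 0) →
      ∀ m ≤ N, (dh M₁ u + bh M₁ u + x) (m - 1) = 0 ∧
        (dh M₂ v + bh M₂ v + fh f u - y) m = 0 := by
  have H : ∃ e, ∀ N : ℤ, (∀ m < N, coneD M₁ M₂ (x, y) + coneB f (x, y) ∈ coneV M₁ M₂ m) →
      ∀ m ≤ N, coneD M₁ M₂ e + coneB f e - (x, y) ∈ coneV M₁ M₂ m := by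
    refine abstract_solve (coneV M₁ M₂) (coneB f) (coneD M₁ M₂) ?_ ?_ ?_ ?_ ?_ ?_ ?_ (x, y)
    · intro n hn
      rw [eq_top_iff]
      intro p _
      have := M₁.trivNeg (n - 1) (by omega)
      have := M₂.trivNeg n hn
      exact ⟨Subsingleton.elim _ _, Subsingleton.elim _ _⟩
    · intro g
      refine ⟨(fun m => (g (m + 1)).1 m, fun m => (g m).2 m), fun n => ⟨?_, ?_⟩⟩
      · simp
      · simp
    · rintro n ⟨p, q⟩ ⟨h1, h2⟩
      dsimp only at h1 h2
      refine ⟨?_, ?_⟩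
      · simp [coneB, bh_pred, h1]
      · simp [coneB, bh_pred, fh_apply, h1, h2]
    · rintro n ⟨p, q⟩ ⟨h1, h2⟩
      dsimp only at h1 h2
      refine ⟨?_, ?_⟩
      · have : dh M₁ p (n - 1 + 1) = 0 := by rw [dh_succ, h1, map_zero]
        rw [show n - 1 + 1 = n + 1 - 1 by ring] at this
        simp only [coneD, AddMonoidHom.coe_mk, ZeroHom.coe_mk, Pi.neg_apply, this, neg_zero]
      · simp [coneD, dh_succ, h2]
    · rintro ⟨p, q⟩
      simp [coneD, dh_dh]
    · rintro ⟨p, q⟩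
      have h1 := bh_dh M₁ p
      have h2 := bh_dh M₂ q
      have h3 := dh_fh f hδ p
      ext1
      · simp only [coneB, coneD, AddMonoidHom.coe_mk, ZeroHom.coe_mk, Prod.fst_add, map_neg, neg_neg, h1]; rfl
      · simp only [coneB, coneD, AddMonoidHom.coe_mk, ZeroHom.coe_mk, Prod.snd_add, map_neg, map_add, h3]
        rw [show ∀ a b c : Tot M₂, a + -b + (c + b) = a + c by intros; abel, h2]; rfl
    · rintro n ⟨p, q⟩ ⟨h1, h2⟩
      simp only [coneB, AddMonoidHom.coe_mk, ZeroHom.coe_mk, Pi.neg_apply, neg_eq_zero, Pi.add_apply] at h1 h2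
      obtain ⟨u, hu⟩ := hinj (n - 1) p (-q) h1 (by
        rw [map_neg, Pi.neg_apply]; exact eq_neg_of_add_eq_zero_right h2)
      have h3 : bh M₂ (q + fh f u) (n - 1) = 0 := by
        rw [map_add, bh_fh f hβ, Pi.add_apply, fh_apply, ← hu]; exact h2
      obtain ⟨x, v, hx, hv⟩ := hsurj n _ h3
      refine ⟨(x - u, v), ?_, ?_⟩
      · simp [coneB, hx, hu]
      · simp only [coneB, AddMonoidHom.coe_mk, ZeroHom.coe_mk, Prod.snd_sub, map_sub, Pi.add_apply, Pi.sub_apply] at hv ⊢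
        rw [eq_sub_of_add_eq hv]
        abel
  obtain ⟨⟨u, v⟩, h⟩ := H
  · refine ⟨u, v, fun N hN m hm => ?_⟩
    have := h N (fun m hm => ?_) m hm
    · rw [mem_coneV] at this
      obtain ⟨h1, h2⟩ := this
      refine ⟨?_, ?_⟩
      · rw [← neg_eq_zero, ← h1]
        simp only [coneB, coneD, AddMonoidHom.coe_mk, ZeroHom.coe_mk, Prod.fst_add, Prod.fst_sub,
          Pi.add_apply, Pi.sub_apply, Pi.neg_apply]
        abel
      · rw [← h2]
        simp only [coneB, coneD, AddMonoidHom.coe_mk, ZeroHom.coe_mk, Prod.snd_add, Prod.snd_sub,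
          Pi.add_apply, Pi.sub_apply]
        abel
    · obtain ⟨h1, h2⟩ := hN m hm
      rw [mem_coneV]
      refine ⟨?_, ?_⟩
      · rw [← neg_eq_zero, ← h1]
        simp only [coneB, coneD, AddMonoidHom.coe_mk, ZeroHom.coe_mk, Prod.fst_add,
          Pi.add_apply, Pi.neg_apply]
        abel
      · rw [← h2]
        simp only [coneB, coneD, AddMonoidHom.coe_mk, ZeroHom.coe_mk, Prod.snd_add,
          Pi.add_apply]
        abel

end Helpers

end CDGA

namespace CDGA

section Helpers2

variable {κ : Type} [Field κ]

theorem mapQ_bij {A₁ A₂ : Type} [AddCommGroup A₁] [Module κ A₁] [AddCommGroup A₂] [Module κ A₂]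
    (Z₁ B₁ : Submodule κ A₁) (Z₂ B₂ : Submodule κ A₂) (g : A₁ →ₗ[κ] A₂)
    (h1 : ∀ x ∈ Z₁, g x ∈ Z₂)
    (h2 : B₁.comap Z₁.subtype ≤ (B₂.comap Z₂.subtype).comap (g.restrict h1)) :
    Function.Bijective (Submodule.mapQ (B₁.comap Z₁.subtype) (B₂.comap Z₂.subtype) (g.restrict h1) h2) ↔
    (∀ x ∈ Z₁, g x ∈ B₂ → x ∈ B₁) ∧ (∀ y ∈ Z₂, ∃ x ∈ Z₁, g x - y ∈ B₂) := by
  refine and_congr ?_ ?_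
  · rw [injective_iff_map_eq_zero]
    constructor
    · intro h x hx hg
      have := h (Submodule.Quotient.mk ⟨x, hx⟩) (by
        rw [Submodule.mapQ_apply, Submodule.Quotient.mk_eq_zero]; exact hg)
      rw [Submodule.Quotient.mk_eq_zero] at this
      exact this
    · intro h q
      obtain ⟨⟨x, hx⟩, rfl⟩ := Submodule.Quotient.mk_surjective _ q
      rw [Submodule.mapQ_apply, Submodule.Quotient.mk_eq_zero, Submodule.Quotient.mk_eq_zero]
      exact h x hx
  · constructor
    · intro h y hy
      obtain ⟨q, hq⟩ := h (Submodule.Quotient.mk ⟨y, hy⟩)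
      obtain ⟨⟨x, hx⟩, rfl⟩ := Submodule.Quotient.mk_surjective _ q
      rw [Submodule.mapQ_apply, Submodule.Quotient.eq] at hq
      exact ⟨x, hx, hq⟩
    · intro h q
      obtain ⟨⟨y, hy⟩, rfl⟩ := Submodule.Quotient.mk_surjective _ q
      obtain ⟨x, hx, hxy⟩ := h y hy
      refine ⟨Submodule.Quotient.mk ⟨x, hx⟩, ?_⟩
      rw [Submodule.mapQ_apply, Submodule.Quotient.eq]
      exact hxy

section
variable {C₁ C₂ : ℤ → Type}
  [∀ n, AddCommGroup (C₁ n)] [∀ n, Module κ (C₁ n)]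
  [∀ n, AddCommGroup (C₂ n)] [∀ n, Module κ (C₂ n)]

theorem hMap_bij (d₁ : ∀ n : ℤ, C₁ n →ₗ[κ] C₁ (n - 1)) (d₂ : ∀ n : ℤ, C₂ n →ₗ[κ] C₂ (n - 1))
    (a b : ℤ) (g : C₁ a →ₗ[κ] C₂ b)
    (h : bcycles d₁ a ≤ (bcycles d₂ b).comap g ∧ bbound d₁ a ≤ (bbound d₂ b).comap g) :
    Function.Bijective (hMap₂ d₁ d₂ a b g) ↔
    (∀ x ∈ bcycles d₁ a, g x ∈ bbound d₂ b → x ∈ bbound d₁ a) ∧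
      (∀ y ∈ bcycles d₂ b, ∃ x ∈ bcycles d₁ a, g x - y ∈ bbound d₂ b) := by
  rw [hMap₂, dif_pos h]
  exact mapQ_bij _ _ _ _ _ _ _

theorem Hmap_bij (d₁ : ∀ n : ℤ, C₁ n →ₗ[κ] C₁ (n + 1)) (d₂ : ∀ n : ℤ, C₂ n →ₗ[κ] C₂ (n + 1))
    (a b : ℤ) (g : C₁ a →ₗ[κ] C₂ b)
    (h : cocycles d₁ a ≤ (cocycles d₂ b).comap g ∧ cobound d₁ a ≤ (cobound d₂ b).comap g) :
    Function.Bijective (Hmap₂ d₁ d₂ a b g) ↔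
    (∀ x ∈ cocycles d₁ a, g x ∈ cobound d₂ b → x ∈ cobound d₁ a) ∧
      (∀ y ∈ cocycles d₂ b, ∃ x ∈ cocycles d₁ a, g x - y ∈ cobound d₂ b) := by
  rw [Hmap₂, dif_pos h]
  exact mapQ_bij _ _ _ _ _ _ _
end

/-! Extending a single component. -/

theorem tot_surj (M : Mixed κ) (n : ℤ) (x : M.C n) : ∃ w : Tot M, w n = x :=
  ⟨Function.update 0 n x, by simp⟩

theorem mem_bcycles_β (M : Mixed κ) (n : ℤ) (w : Tot M) :
    w n ∈ bcycles M.β n ↔ bh M w (n - 1) = 0 := by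
  rw [bh_pred]; rfl

theorem mem_bbound_β (M : Mixed κ) (n : ℤ) (x : M.C n) :
    x ∈ bbound M.β n ↔ ∃ w, bh M w n = x := by
  constructor
  · rintro ⟨y, hy⟩
    obtain ⟨w, rfl⟩ := tot_surj M _ y
    exact ⟨w, hy⟩
  · rintro ⟨w, hw⟩
    exact ⟨w (n + 1), hw⟩

/-- Total differential. -/
def Dh (M : Mixed κ) : Tot M →ₗ[κ] Tot M := dh M + bh M

theorem Dh_eq (M : Mixed κ) (w : Tot M) : Dh M w = dh M w + bh M w := rfl

/-! The complex `plusC`. -/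

def Rp (M : Mixed κ) (r : ℤ) : Tot M →ₗ[κ] plusC M r :=
  LinearMap.pi fun k => LinearMap.proj (r - 2 * (k : ℤ))

theorem plusDelta_Rp (M : Mixed κ) (r : ℤ) (w : Tot M) :
    plusDelta M r (Rp M r w) = Rp M (r - 1) (Dh M w) := by
  funext k
  change (fcast (κ := κ) (C := M.C) _) (M.β _ (w (r - 2 * (k : ℤ)))) +
    (fcast (κ := κ) (C := M.C) _) (M.δ _ (w (r - 2 * ((k + 1 : ℕ) : ℤ)))) =
    dh M w (r - 1 - 2 * (k : ℤ)) + bh M w (r - 1 - 2 * (k : ℤ))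
  rw [dh_apply, bh_apply, add_comm]
  congr 1
  · apply fcast_δ; push_cast; ring
  · apply fcast_β; ring

theorem fcast_Rp (M : Mixed κ) {a b : ℤ} (h : a = b) (w : Tot M) :
    (fcast (κ := κ) (C := plusC M) h) (Rp M a w) = Rp M b w := by
  subst h; rfl

theorem fcast_tot (M : Mixed κ) {a b : ℤ} (h : a = b) (w : Tot M) :
    (fcast (κ := κ) (C := M.C) h) (w a) = w b := by
  subst h; rfl

theorem fcast_plus (M : Mixed κ) (r : ℤ) (x : plusC M r) {j k : ℕ} (hjk : j = k)
    (h : r - 2 * (j : ℤ) = r - 2 * (k : ℤ)) :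
    (fcast (κ := κ) (C := M.C) h) (x j) = x k := by
  subst hjk; rfl

theorem Rp_surj (M : Mixed κ) (r : ℤ) (x : plusC M r) :
    ∃ w : Tot M, Rp M r w = x ∧ ∀ n, n % 2 ≠ r % 2 → w n = 0 := by
  refine ⟨fun n => if h : n ≤ r ∧ n % 2 = r % 2 then
    (fcast (κ := κ) (C := M.C) (show r - 2 * ((((r - n) / 2).toNat : ℕ) : ℤ) = n by omega))
      (x ((r - n) / 2).toNat) else 0, ?_, ?_⟩
  · funext k
    change dite _ _ _ = _
    rw [dif_pos (by omega)]
    apply fcast_plus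
    omega
  · intro n hn
    exact dif_neg (fun h => hn h.2)

theorem Rp_eq_zero (M : Mixed κ) (r : ℤ) (w : Tot M) (hw : ∀ n, n % 2 ≠ r % 2 → w n = 0) :
    Rp M r w = 0 ↔ ∀ m < r + 1, w m = 0 := by
  constructor
  · intro h m hm
    by_cases hp : m % 2 = r % 2
    · obtain ⟨k, rfl⟩ : ∃ k : ℕ, m = r - 2 * (k : ℤ) := ⟨((r - m) / 2).toNat, by omega⟩
      exact congrFun h k
    · exact hw m hp
  · intro h
    funext k
    exact h _ (by omega)

theorem Rp_zero (M : Mixed κ) (r : ℤ) (w : Tot M) (h : ∀ m < r + 1, w m = 0) :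
    Rp M r w = 0 := by
  funext k
  exact h _ (by omega)

theorem Dh_parity (M : Mixed κ) (r s : ℤ) (hs : r % 2 ≠ s % 2) (w : Tot M)
    (hw : ∀ n, n % 2 ≠ r % 2 → w n = 0) :
    ∀ n, n % 2 ≠ s % 2 → Dh M w n = 0 := by
  intro n hn
  rw [Dh_eq, Pi.add_apply, dh_apply, bh_apply, hw (n - 1) (by omega), hw (n + 1) (by omega)]
  simp

theorem mem_bbound_plus (M : Mixed κ) (r : ℤ) (x : plusC M r) :
    x ∈ bbound (plusDelta M) r ↔
      ∃ w, Rp M r (Dh M w) = x ∧ ∀ n, n % 2 ≠ (r + 1) % 2 → w n = 0 := by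
  constructor
  · rintro ⟨y, hy⟩
    obtain ⟨w, rfl, hw⟩ := Rp_surj M _ y
    rw [LinearMap.comp_apply, plusDelta_Rp, fcast_Rp] at hy
    exact ⟨w, hy, hw⟩
  · rintro ⟨w, hw, _⟩
    refine ⟨Rp M (r + 1) w, ?_⟩
    rw [LinearMap.comp_apply, plusDelta_Rp, fcast_Rp, hw]

theorem mem_bbound_plus_of (M : Mixed κ) (r : ℤ) (w : Tot M) :
    Rp M r (Dh M w) ∈ bbound (plusDelta M) r := by
  refine ⟨Rp M (r + 1) w, ?_⟩
  rw [LinearMap.comp_apply, plusDelta_Rp, fcast_Rp]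

theorem mem_bcycles_plus (M : Mixed κ) (r : ℤ) (w : Tot M) :
    Rp M r w ∈ bcycles (plusDelta M) r ↔ Rp M (r - 1) (Dh M w) = 0 := by
  rw [← plusDelta_Rp]; rfl

/-! The complex `pprodC`. -/

def Rq (M : Mixed κ) (r : ℤ) : Tot M →ₗ[κ] pprodC M r :=
  LinearMap.pi fun n => LinearMap.proj n.1

theorem pprodD_Rq (M : Mixed κ) (r : ℤ) (w : Tot M) :
    pprodD M r (Rq M r w) = Rq M (r + 1) (Dh M w) := rfl

theorem fcast_Rq (M : Mixed κ) {a b : ℤ} (h : a = b) (w : Tot M) :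
    (fcast (κ := κ) (C := pprodC M) h) (Rq M a w) = Rq M b w := by
  subst h; rfl

theorem Rq_surj (M : Mixed κ) (r : ℤ) (x : pprodC M r) :
    ∃ w : Tot M, Rq M r w = x ∧ ∀ n, n % 2 ≠ r % 2 → w n = 0 := by
  refine ⟨fun n => if h : n % 2 = r % 2 then x ⟨n, h⟩ else 0, ?_, ?_⟩
  · funext k
    change dite _ _ _ = _
    rw [dif_pos k.2]
  · intro n hn
    exact dif_neg hn

theorem Rq_eq_zero (M : Mixed κ) (r : ℤ) (w : Tot M) (hw : ∀ n, n % 2 ≠ r % 2 → w n = 0) :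
    Rq M r w = 0 ↔ w = 0 := by
  constructor
  · intro h
    funext m
    by_cases hp : m % 2 = r % 2
    · exact congrFun h ⟨m, hp⟩
    · exact hw m hp
  · rintro rfl
    rfl

theorem mem_cobound_pprod_of (M : Mixed κ) (r : ℤ) (w : Tot M) :
    Rq M r (Dh M w) ∈ cobound (pprodD M) r := by
  refine ⟨Rq M (r - 1) w, ?_⟩
  rw [LinearMap.comp_apply, pprodD_Rq, fcast_Rq]

theorem mem_cobound_pprod (M : Mixed κ) (r : ℤ) (x : pprodC M r) :
    x ∈ cobound (pprodD M) r ↔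
      ∃ w, Rq M r (Dh M w) = x ∧ ∀ n, n % 2 ≠ (r + 1) % 2 → w n = 0 := by
  constructor
  · rintro ⟨y, hy⟩
    obtain ⟨w, rfl, hw⟩ := Rq_surj M _ y
    rw [LinearMap.comp_apply, pprodD_Rq, fcast_Rq] at hy
    exact ⟨w, hy, fun n hn => hw n (by omega)⟩
  · rintro ⟨w, rfl, _⟩
    exact mem_cobound_pprod_of M r w

theorem mem_cocycles_pprod (M : Mixed κ) (r : ℤ) (w : Tot M) :
    Rq M r w ∈ cocycles (pprodD M) r ↔ Rq M (r + 1) (Dh M w) = 0 := by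
  rw [← pprodD_Rq]; rfl

variable {M₁ M₂ : Mixed κ}

theorem plusMap_Rp (f : ∀ n : ℤ, M₁.C n →ₗ[κ] M₂.C n) (r : ℤ) (w : Tot M₁) :
    plusMap f r (Rp M₁ r w) = Rp M₂ r (fh f w) := rfl

theorem pprodMap_Rq (f : ∀ n : ℤ, M₁.C n →ₗ[κ] M₂.C n) (r : ℤ) (w : Tot M₁) :
    pprodMap f r (Rq M₁ r w) = Rq M₂ r (fh f w) := rfl

/-- `f` maps zero components to zero components. -/
theorem fh_parity (f : ∀ n : ℤ, M₁.C n →ₗ[κ] M₂.C n) (r : ℤ) (w : Tot M₁)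
    (hw : ∀ n, n % 2 ≠ r % 2 → w n = 0) : ∀ n, n % 2 ≠ r % 2 → fh f w n = 0 := by
  intro n hn
  rw [fh_apply, hw n hn, map_zero]

end Helpers2

end CDGA

namespace CDGA

/-- if a morphism of mixed complexes induces an isomorphism on the
homology `H_n(C, β)` for every `n`, then it induces isomorphisms on `^+H^δ_r`
and on `𝕡H^r` for every `r`. -/
theorem statement3 (κ : Type) [Field κ] (M₁ M₂ : Mixed κ)
    (f : ∀ n : ℤ, M₁.C n →ₗ[κ] M₂.C n)
    (hδ : ∀ (n : ℤ) (x : M₁.C n), M₂.δ n (f n x) = f (n + 1) (M₁.δ n x))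
    (hβ : ∀ (n : ℤ) (x : M₁.C n), M₂.β n (f n x) = f (n - 1) (M₁.β n x))
    (hiso : ∀ n : ℤ, Function.Bijective (hMap₂ M₁.β M₂.β n n (f n))) :
    (∀ r : ℤ, Function.Bijective (hMap₂ (plusDelta M₁) (plusDelta M₂) r r (plusMap f r))) ∧
    (∀ r : ℤ, Function.Bijective (Hmap₂ (pprodD M₁) (pprodD M₂) r r (pprodMap f r))) := by
  have hD : ∀ w, Dh M₂ (fh f w) = fh f (Dh M₁ w) := by
    intro w
    rw [Dh_eq, Dh_eq, dh_fh f hδ, bh_fh f hβ, map_add]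
  -- unpack the hypothesis
  have hcomp : ∀ n, bcycles M₁.β n ≤ (bcycles M₂.β n).comap (f n) ∧
      bbound M₁.β n ≤ (bbound M₂.β n).comap (f n) := by
    intro n
    refine ⟨fun x hx => ?_, fun x hx => ?_⟩
    · have hx' : M₁.β n x = 0 := hx
      change M₂.β n (f n x) = 0
      rw [hβ, hx', map_zero]
    · obtain ⟨w, rfl⟩ := (mem_bbound_β M₁ n x).1 hx
      refine (mem_bbound_β M₂ n _).2 ⟨fh f w, ?_⟩
      rw [bh_fh f hβ]; rfl
  have hiso' := fun n => (hMap_bij _ _ n n (f n) (hcomp n)).1 (hiso n)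
  have hinj : ∀ n (x : Tot M₁) (y : Tot M₂), bh M₁ x (n - 1) = 0 → fh f x n = bh M₂ y n →
      ∃ u, x n = bh M₁ u n := by
    intro n x y hx hxy
    obtain ⟨u, hu⟩ := (mem_bbound_β M₁ n _).1 ((hiso' n).1 (x n) ((mem_bcycles_β M₁ n x).2 hx)
      ((mem_bbound_β M₂ n _).2 ⟨y, hxy.symm⟩))
    exact ⟨u, hu.symm⟩
  have hsurj : ∀ n (y : Tot M₂), bh M₂ y (n - 1) = 0 →
      ∃ x v, bh M₁ x (n - 1) = 0 ∧ y n = fh f x n + bh M₂ v n := by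
    intro n y hy
    obtain ⟨x0, hx0, hxy⟩ := (hiso' n).2 (y n) ((mem_bcycles_β M₂ n y).2 hy)
    obtain ⟨x, rfl⟩ := tot_surj M₁ n x0
    obtain ⟨v, hv⟩ := (mem_bbound_β M₂ n _).1 hxy
    refine ⟨x, -v, (mem_bcycles_β M₁ n x).1 hx0, ?_⟩
    rw [map_neg, Pi.neg_apply, hv, fh_apply]
    abel
  have solve := cone_solve f hδ hβ hinj hsurj
  have solveS : ∀ y : Tot M₂, ∃ (u : Tot M₁) (v : Tot M₂), ∀ N : ℤ,
      (∀ m < N, Dh M₂ y m = 0) →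
      (∀ m < N, Dh M₁ u m = 0) ∧ ∀ m < N + 1, (fh f u - y - Dh M₂ v) m = 0 := by
    intro y
    obtain ⟨u, v, h⟩ := solve 0 y
    refine ⟨u, -v, fun N hN => ?_⟩
    have h' := h N (fun m hm => ⟨by simp, by simpa [Dh_eq] using hN m hm⟩)
    refine ⟨fun m hm => ?_, fun m hm => ?_⟩
    · have := (h' (m + 1) (by omega)).1
      rw [show m + 1 - 1 = m by ring] at this
      simpa [Dh_eq] using this
    · have := (h' m (by omega)).2
      rw [← this, map_neg, Dh_eq]
      simp only [Pi.add_apply, Pi.sub_apply, Pi.neg_apply]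
      abel
  have solveI : ∀ (x : Tot M₁) (y : Tot M₂), ∃ (u : Tot M₁), ∀ N : ℤ,
      (∀ m < N, Dh M₁ x m = 0) → (∀ m < N + 1, (fh f x - Dh M₂ y) m = 0) →
      (∀ m < N + 1, (Dh M₁ u - x) m = 0) := by
    intro x y
    obtain ⟨u, v, h⟩ := solve x (-y)
    refine ⟨-u, fun N hN1 hN2 m hm => ?_⟩
    have := (h (N + 1) (fun m hm => ⟨hN1 _ (by omega), ?_⟩) (m + 1) (by omega)).1
    · rw [show m + 1 - 1 = m by ring] at this
      rw [← neg_eq_zero, ← this, map_neg, Dh_eq]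
      simp only [Pi.add_apply, Pi.sub_apply, Pi.neg_apply]
      abel
    · rw [← hN2 m hm, Dh_eq]
      simp only [map_neg, Pi.add_apply, Pi.sub_apply, Pi.neg_apply]
      abel
  refine ⟨fun r => ?_, fun r => ?_⟩
  · rw [hMap_bij]
    · refine ⟨fun x0 hx hg => ?_, fun y0 hy => ?_⟩
      · obtain ⟨x, rfl, hxp⟩ := Rp_surj M₁ r x0
        obtain ⟨y, hxy, hyp⟩ := (mem_bbound_plus _ _ _).1 hg
        rw [plusMap_Rp] at hxy
        obtain ⟨u, hu⟩ := solveI x y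
        have := hu r (fun m hm => ?_) ?_
        · have h2 := Rp_zero _ _ _ this
          rw [map_sub, sub_eq_zero] at h2
          rw [← h2]
          exact mem_bbound_plus_of _ _ _
        · exact (Rp_eq_zero M₁ (r - 1) _ (Dh_parity M₁ r (r - 1) (by omega) x hxp)).1
            ((mem_bcycles_plus _ _ _).1 hx) m (by omega)
        · refine (Rp_eq_zero M₂ r _ ?_).1 (by rw [map_sub, hxy, sub_self])
          intro n hn
          rw [Pi.sub_apply, fh_parity f r x hxp n hn,
            Dh_parity M₂ (r + 1) r (by omega) y hyp n hn, sub_zero]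
      · obtain ⟨y, rfl, hyp⟩ := Rp_surj M₂ r y0
        obtain ⟨u, v, h⟩ := solveS y
        obtain ⟨h1, h2⟩ := h r (fun m hm =>
          (Rp_eq_zero M₂ (r - 1) _ (Dh_parity M₂ r (r - 1) (by omega) y hyp)).1
            ((mem_bcycles_plus _ _ _).1 hy) m (by omega))
        refine ⟨Rp M₁ r u, (mem_bcycles_plus _ _ _).2
          (Rp_zero _ _ _ fun m hm => h1 m (by omega)), ?_⟩
        have h3 := Rp_zero _ _ _ h2
        rw [map_sub, map_sub, sub_eq_zero] at h3
        rw [plusMap_Rp, h3]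
        exact mem_bbound_plus_of _ _ _
    · refine ⟨fun x0 hx => ?_, fun x0 hx => ?_⟩
      · obtain ⟨x, rfl, _⟩ := Rp_surj M₁ r x0
        rw [Submodule.mem_comap, plusMap_Rp, mem_bcycles_plus, hD, ← plusMap_Rp,
          (mem_bcycles_plus _ _ _).1 hx, map_zero]
      · obtain ⟨w, rfl, _⟩ := (mem_bbound_plus _ _ _).1 hx
        rw [Submodule.mem_comap, plusMap_Rp, ← hD]
        exact mem_bbound_plus_of _ _ _
  · rw [Hmap_bij]
    · refine ⟨fun x0 hx hg => ?_, fun y0 hy => ?_⟩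
      · obtain ⟨x, rfl, hxp⟩ := Rq_surj M₁ r x0
        obtain ⟨y, hxy, hyp⟩ := (mem_cobound_pprod _ _ _).1 hg
        rw [pprodMap_Rq] at hxy
        obtain ⟨u, hu⟩ := solveI x y
        have e1 : Dh M₁ x = 0 :=
          (Rq_eq_zero M₁ (r + 1) _ (Dh_parity M₁ r (r + 1) (by omega) x hxp)).1
            ((mem_cocycles_pprod _ _ _).1 hx)
        have e2 : fh f x - Dh M₂ y = 0 := by
          refine (Rq_eq_zero M₂ r _ ?_).1 (by rw [map_sub, hxy, sub_self])
          intro n hn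
          rw [Pi.sub_apply, fh_parity f r x hxp n hn,
            Dh_parity M₂ (r + 1) r (by omega) y hyp n hn, sub_zero]
        have e3 : Dh M₁ u - x = 0 := by
          funext m
          exact hu m (fun k _ => by rw [e1]; rfl) (fun k _ => by rw [e2]; rfl) m (by omega)
        rw [← sub_eq_zero.1 e3]
        exact mem_cobound_pprod_of _ _ _
      · obtain ⟨y, rfl, hyp⟩ := Rq_surj M₂ r y0
        obtain ⟨u, v, h⟩ := solveS y
        have e1 : Dh M₂ y = 0 :=
          (Rq_eq_zero M₂ (r + 1) _ (Dh_parity M₂ r (r + 1) (by omega) y hyp)).1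
            ((mem_cocycles_pprod _ _ _).1 hy)
        have h0 := fun N => h N (fun k _ => by rw [e1]; rfl)
        have e2 : Dh M₁ u = 0 := by
          funext m
          exact (h0 (m + 1)).1 m (by omega)
        have e3 : fh f u - y - Dh M₂ v = 0 := by
          funext m
          exact (h0 m).2 m (by omega)
        refine ⟨Rq M₁ r u, (mem_cocycles_pprod _ _ _).2 (by rw [e2, map_zero]), ?_⟩
        rw [pprodMap_Rq, ← map_sub, sub_eq_zero.1 e3]
        exact mem_cobound_pprod_of _ _ _
    · refine ⟨fun x0 hx => ?_, fun x0 hx => ?_⟩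
      · obtain ⟨x, rfl, _⟩ := Rq_surj M₁ r x0
        rw [Submodule.mem_comap, pprodMap_Rq, mem_cocycles_pprod, hD, ← pprodMap_Rq,
          (mem_cocycles_pprod _ _ _).1 hx, map_zero]
      · obtain ⟨w, rfl, _⟩ := (mem_cobound_pprod _ _ _).1 hx
        rw [Submodule.mem_comap, pprodMap_Rq, ← hD]
        exact mem_cobound_pprod_of _ _ _

end CDGA
end
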